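/- Let ε > 0 be fixed. There exist constants C = C(ε) > 0 and B = B(ε) > 0 such that the following holds. Let d ≥ 2 be an integer, let N ≥ 2 be real, and let N_1, …, N_40 ≥ 1/2 be reals with N_1 ⋯ N_40 ≤ N^{15/8−ε}. For each j = 1, …, 40, let a_j : ℕ → ℂ be one of the three functions n ↦ 1, n ↦ μ(n), or n ↦ log n, and assume that a_j is n ↦ 1 or n ↦ log n for every j with N_j > N^{1/10}. Then ∫_{−∞}^{∞} Σ*_{χ mod d} |Π_{j=1}^{40} Σ_{N_j < n ≤ 2N_j} a_j(n) χ(n) n^{−1/2−it}| dt/(t²+1) ≤ C · ((N+d)² N^{1/16}/d) · (log(dN))^B. -/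

import Mathlib

open MeasureTheory Real Complex Finset

/-- The sum of `f` over all primitive Dirichlet characters modulo `d`
(a finite sum, since there are finitely many Dirichlet characters modulo `d`). -/
noncomputable def sumPrimitive (d : ℕ) (f : DirichletCharacter ℂ d → ℝ) : ℝ :=
  ∑ᶠ χ ∈ {χ : DirichletCharacter ℂ d | χ.IsPrimitive}, f χ

/-!
Group the factors of the product into two blocks and apply Cauchy–Schwarz. The multiplicative large
sieve bounds the second moment of a block of length `Q` by `d + Q`, up to logarithms, which is
enough when the total length is at most `L ^ 5` with `L ≍ N ^ (3/8)` and both blocks have length at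
most `L ^ 3`. A greedy grouping achieves this unless some factor is long. Such a factor has
coefficients `1` or `log`, so expanding `χ` in additive characters through its Gauss sum and summing
by parts replaces it by a dual polynomial. Together with a companion block no longer than itself,
the long factor then has second moment `O(d (1 + |t|) ^ 2)`, again up to logarithms.

The factor `1 + |t|` makes the `t`-integral diverge only logarithmically; interpolating with the
trivial bound `d N` costs one more logarithm.
-/

namespace DirichletPolynomial

section Convolution

variable {f g h : ArithmeticFunction ℝ}

lemma mul_apply_nonneg (hf : ∀ n, 0 ≤ f n) (hg : ∀ n, 0 ≤ g n) (n : ℕ) : 0 ≤ (f * g) n := by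
  rw [ArithmeticFunction.mul_apply]
  exact sum_nonneg fun p _ => mul_nonneg (hf _) (hg _)

lemma pow_apply_nonneg (hh : ∀ n, 0 ≤ h n) (k n : ℕ) : 0 ≤ (h ^ k) n := by
  induction k generalizing n with
  | zero => rw [pow_zero, ArithmeticFunction.one_apply]; split_ifs <;> norm_num
  | succ k ih => rw [pow_succ]; exact mul_apply_nonneg ih hh n

lemma mul_apply_mul_le (hf : ∀ n, 0 ≤ f n) (hg : ∀ n, 0 ≤ g n)
    (hf' : ∀ m n, f (m * n) ≤ f m * f n) (hg' : ∀ m n, g (m * n) ≤ g m * g n) (m n : ℕ) :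
    (f * g) (m * n) ≤ (f * g) m * (f * g) n := by
  simp only [ArithmeticFunction.mul_apply,
    Nat.sum_divisorsAntidiagonal (f := fun i j => f i * g j)]
  rw [Nat.divisors_mul, sum_mul_sum, ← sum_product', ← image_mul_product]
  refine (sum_image_le_of_nonneg fun i _ => mul_nonneg (hf _) (hg _)).trans
    (sum_le_sum fun p hp => ?_)
  obtain ⟨hpm, hpn⟩ := mem_product.1 hp
  rw [← Nat.div_mul_div_comm (Nat.dvd_of_mem_divisors hpm) (Nat.dvd_of_mem_divisors hpn)]
  calc f (p.1 * p.2) * g (m / p.1 * (n / p.2))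
      ≤ f p.1 * f p.2 * (g (m / p.1) * g (n / p.2)) :=
        mul_le_mul (hf' _ _) (hg' _ _) (hg _) (mul_nonneg (hf _) (hf _))
    _ = f p.1 * g (m / p.1) * (f p.2 * g (n / p.2)) := by ring

lemma pow_apply_mul_le (hh : ∀ n, 0 ≤ h n) (hh' : ∀ m n, h (m * n) ≤ h m * h n) (k m n : ℕ) :
    (h ^ k) (m * n) ≤ (h ^ k) m * (h ^ k) n := by
  induction k generalizing m n with
  | zero =>
    rw [pow_zero, ArithmeticFunction.one_apply, ArithmeticFunction.one_apply,
      ArithmeticFunction.one_apply]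
    by_cases hmn : m * n = 1
    · simp [mul_eq_one.1 hmn]
    · rw [if_neg hmn]; split_ifs <;> norm_num
  | succ k ih => rw [pow_succ]; exact mul_apply_mul_le (pow_apply_nonneg hh k) hh ih hh' m n

lemma sum_Ioc_mul_apply_mul_le (hf : ∀ n, 0 ≤ f n) (hh : ∀ n, 0 ≤ h n) {w : ℕ → ℝ}
    (hw : ∀ n, 0 ≤ w n) (hw' : ∀ m n, w (m * n) ≤ w m * w n) (X : ℕ) :
    ∑ n ∈ Ioc 0 X, (f * h) n * w n
      ≤ (∑ n ∈ Ioc 0 X, f n * w n) * ∑ n ∈ Ioc 0 X, h n * w n := by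
  have hsplit : ∀ n ∈ Ioc 0 X, (f * h) n * w n =
      ∑ p ∈ Ioc 0 X ×ˢ Ioc 0 X with p.1 * p.2 = n, f p.1 * h p.2 * w (p.1 * p.2) := by
    intro n hn
    have hn := mem_Ioc.1 hn
    rw [ArithmeticFunction.mul_apply,
      Nat.divisorsAntidiagonal_eq_prod_filter_of_le hn.1.ne' hn.2, sum_mul]
    exact sum_congr rfl fun p hp => by rw [(mem_filter.1 hp).2]
  calc ∑ n ∈ Ioc 0 X, (f * h) n * w n
      ≤ ∑ p ∈ Ioc 0 X ×ˢ Ioc 0 X, f p.1 * h p.2 * w (p.1 * p.2) := by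
        rw [sum_congr rfl hsplit]
        exact sum_fiberwise_le_sum_of_sum_fiber_nonneg fun n _ => sum_nonneg fun p _ =>
          mul_nonneg (mul_nonneg (hf _) (hh _)) (hw _)
    _ ≤ ∑ p ∈ Ioc 0 X ×ˢ Ioc 0 X, f p.1 * w p.1 * (h p.2 * w p.2) := by
        refine sum_le_sum fun p _ => ?_
        rw [mul_mul_mul_comm]
        exact mul_le_mul_of_nonneg_left (hw' _ _) (mul_nonneg (hf _) (hh _))
    _ = _ := by rw [sum_mul_sum, sum_product]

lemma sum_Ioc_pow_apply_mul_le (hh : ∀ n, 0 ≤ h n) {w : ℕ → ℝ} (hw : ∀ n, 0 ≤ w n)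
    (hw' : ∀ m n, w (m * n) ≤ w m * w n) (hw1 : w 1 ≤ 1) (k X : ℕ) :
    ∑ n ∈ Ioc 0 X, (h ^ k) n * w n ≤ (∑ n ∈ Ioc 0 X, h n * w n) ^ k := by
  induction k with
  | zero =>
    simp only [pow_zero, ArithmeticFunction.one_apply, ite_mul, one_mul, zero_mul, sum_ite_eq']
    split_ifs <;> linarith
  | succ k ih =>
    rw [pow_succ, pow_succ]
    exact (sum_Ioc_mul_apply_mul_le (pow_apply_nonneg hh k) hh hw hw' X).trans
      (mul_le_mul_of_nonneg_right ih (sum_nonneg fun n _ => mul_nonneg (hh n) (hw n)))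

end Convolution

/-- The arithmetic function `n ↦ n^{-1/2}`. Its `k`-th Dirichlet convolution power is
`n ↦ d_k(n) n^{-1/2}`, which majorises the coefficients of all products of `k` polynomials. -/
noncomputable def invSqrt : ArithmeticFunction ℝ where
  toFun n := (√(n : ℝ))⁻¹
  map_zero' := by simp

lemma invSqrt_apply (n : ℕ) : invSqrt n = (√(n : ℝ))⁻¹ := rfl

lemma invSqrt_nonneg (n : ℕ) : 0 ≤ invSqrt n := by rw [invSqrt_apply]; positivity

lemma invSqrt_sq (n : ℕ) : invSqrt n ^ 2 = (n : ℝ)⁻¹ := by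
  rw [invSqrt_apply, inv_pow, Real.sq_sqrt n.cast_nonneg]

lemma invSqrt_mul (m n : ℕ) : invSqrt (m * n) = invSqrt m * invSqrt n := by
  simp only [invSqrt_apply, Nat.cast_mul, Real.sqrt_mul m.cast_nonneg, mul_inv]

lemma invSqrt_pow_nonneg (k n : ℕ) : 0 ≤ (invSqrt ^ k) n := pow_apply_nonneg invSqrt_nonneg k n

lemma sum_invSqrt_pow_mul_self_le (k X : ℕ) :
    ∑ n ∈ Ioc 0 X, (invSqrt ^ k) n * (invSqrt ^ k) n ≤ (1 + Real.log X) ^ (k * k) := by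
  have hsub := fun m n => (invSqrt_mul m n).le
  have hone : invSqrt 1 = 1 := by simp [invSqrt_apply]
  have hpow_one : (invSqrt ^ k) 1 ≤ 1 := by
    induction k with
    | zero => simp
    | succ k ih => rw [pow_succ, ArithmeticFunction.mul_apply_one, hone, mul_one]; exact ih
  have hharm : ∑ n ∈ Ioc 0 X, invSqrt n * invSqrt n ≤ 1 + Real.log X := by
    refine le_of_eq_of_le ?_ (harmonic_le_one_add_log X)
    rw [harmonic_eq_sum_Icc]
    push_cast
    exact sum_congr rfl fun n _ => by rw [← sq, invSqrt_sq]
  have hswap : ∑ n ∈ Ioc 0 X, invSqrt n * (invSqrt ^ k) n ≤ (1 + Real.log X) ^ k := by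
    simp only [mul_comm (invSqrt _)]
    refine (sum_Ioc_pow_apply_mul_le invSqrt_nonneg invSqrt_nonneg hsub hone.le k X).trans ?_
    exact pow_le_pow_left₀ (sum_nonneg fun n _ => mul_self_nonneg _) hharm k
  refine (sum_Ioc_pow_apply_mul_le invSqrt_nonneg (invSqrt_pow_nonneg k)
    (pow_apply_mul_le invSqrt_nonneg hsub k) hpow_one k X).trans ?_
  rw [pow_mul]
  exact pow_le_pow_left₀ (sum_nonneg fun n _ =>
    mul_nonneg (invSqrt_nonneg n) (invSqrt_pow_nonneg k n)) hswap k

section LargeSieve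

variable {d : ℕ}

lemma mul_star_apply_eq {n : ZMod d} (hn : IsUnit n) (χ : DirichletCharacter ℂ d) (m : ZMod d) :
    χ m * star (χ n) = χ n⁻¹ * χ m := by
  have hinv : χ n⁻¹ * χ n = 1 := by rw [← map_mul, ZMod.inv_mul_of_unit n hn, map_one]
  rw [mul_comm, MulChar.star_apply', MulChar.inv_apply_eq_inv', eq_inv_of_mul_eq_one_left hinv]

variable [NeZero d]

lemma sum_mul_star_apply (m n : ZMod d) :
    ∑ χ : DirichletCharacter ℂ d, χ m * star (χ n) =
      if m = n ∧ IsUnit n then (d.totient : ℂ) else 0 := by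
  by_cases hn : IsUnit n
  · rw [sum_congr rfl fun χ _ => mul_star_apply_eq hn χ m,
      DirichletCharacter.sum_char_inv_mul_char_eq ℂ hn]
    simp only [hn, and_true, eq_comm]
  · simp [hn, MulChar.map_nonunit _ hn]

lemma sum_norm_sum_sq_le (G : ZMod d → ℂ) :
    ∑ χ : DirichletCharacter ℂ d, ‖∑ b, G b * χ b‖ ^ 2 ≤ d * ∑ b, ‖G b‖ ^ 2 := by
  classical
  have hexpand : ((∑ χ : DirichletCharacter ℂ d, ‖∑ b, G b * χ b‖ ^ 2 : ℝ) : ℂ) =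
      ∑ b : ZMod d, ((if IsUnit b then d.totient * ‖G b‖ ^ 2 else 0 : ℝ) : ℂ) := by
    calc ((∑ χ : DirichletCharacter ℂ d, ‖∑ b, G b * χ b‖ ^ 2 : ℝ) : ℂ)
        = ∑ χ : DirichletCharacter ℂ d, ∑ b, ∑ b', G b * star (G b') * (χ b * star (χ b')) := by
          push_cast
          refine sum_congr rfl fun χ _ => ?_
          rw [← Complex.mul_conj', map_sum, sum_mul_sum]
          refine sum_congr rfl fun b _ => sum_congr rfl fun b' _ => ?_
          rw [map_mul, Complex.star_def, mul_mul_mul_comm]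
      _ = ∑ b, ∑ b', G b * star (G b') * ∑ χ : DirichletCharacter ℂ d, χ b * star (χ b') := by
          simp only [mul_sum]
          rw [sum_comm]
          exact sum_congr rfl fun b _ => sum_comm
      _ = _ := by
          refine sum_congr rfl fun b _ => ?_
          simp only [sum_mul_star_apply, ite_and, mul_ite, mul_zero, sum_ite_eq, mem_univ, if_true]
          rw [Complex.star_def, Complex.mul_conj', mul_comm]
          split_ifs <;> push_cast <;> rfl
  rw [← Complex.ofReal_sum, Complex.ofReal_inj] at hexpand
  rw [hexpand, mul_sum]
  refine sum_le_sum fun b _ => ?_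
  split_ifs
  · gcongr
    exact Nat.totient_le d
  · positivity

lemma sum_inv_add_le_of_natCast_eq (X : ℕ) (b : ZMod d) :
    ∑ n ∈ (Ioc 0 X).filter (fun n : ℕ => (n : ZMod d) = b), ((d : ℝ) + n)⁻¹ ≤
      (1 + Real.log (X + 1)) / d := by
  have hd : (0 : ℝ) < d := mod_cast NeZero.pos d
  have hterm : ∀ n ∈ (Ioc 0 X).filter fun n : ℕ => (n : ZMod d) = b,
      ((d : ℝ) + n)⁻¹ ≤ (fun q : ℕ => (d : ℝ)⁻¹ * ((q + 1 : ℕ) : ℝ)⁻¹) (n / d) := by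
    intro n _
    have hn : (d : ℝ) * (n / d : ℕ) ≤ n := mod_cast Nat.mul_div_le n d
    simp only [← mul_inv]
    refine inv_anti₀ (by positivity) ?_
    push_cast at hn ⊢
    linarith
  have hinj : Set.InjOn (fun n => n / d) ((Ioc 0 X).filter fun n : ℕ => (n : ZMod d) = b) := by
    intro m hm n hn hmn
    have hmod : m % d = n % d := (ZMod.natCast_eq_natCast_iff' m n d).1
      ((mem_filter.1 hm).2.trans (mem_filter.1 hn).2.symm)
    rw [← Nat.div_add_mod m d, ← Nat.div_add_mod n d, hmod, show m / d = n / d from hmn]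
  calc ∑ n ∈ (Ioc 0 X).filter (fun n : ℕ => (n : ZMod d) = b), ((d : ℝ) + n)⁻¹
      ≤ ∑ q ∈ range (X + 1), (d : ℝ)⁻¹ * ((q + 1 : ℕ) : ℝ)⁻¹ := by
        refine (sum_le_sum hterm).trans ?_
        rw [← sum_image (f := fun q : ℕ => (d : ℝ)⁻¹ * ((q + 1 : ℕ) : ℝ)⁻¹) hinj]
        refine sum_le_sum_of_subset_of_nonneg (image_subset_iff.2 fun n hn => ?_)
          fun q _ _ => by positivity
        have hn := (mem_Ioc.1 (mem_filter.1 hn).1).2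
        exact mem_range.2 (Nat.lt_succ_of_le ((Nat.div_le_self n d).trans hn))
    _ = (d : ℝ)⁻¹ * harmonic (X + 1) := by rw [← mul_sum, harmonic]; push_cast; rfl
    _ ≤ (1 + Real.log (X + 1)) / d := by
        rw [div_eq_inv_mul]
        gcongr
        exact_mod_cast harmonic_le_one_add_log (X + 1)

/-- The weights `d + n` replace the usual factor `d + X`; they let one sieve the dual coefficients,
which decay in `n`, without a dyadic decomposition. -/
lemma sum_norm_sum_Ioc_sq_le (X : ℕ) (c : ℕ → ℂ) :
    ∑ χ : DirichletCharacter ℂ d, ‖∑ n ∈ Ioc 0 X, c n * χ n‖ ^ 2 ≤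
      (1 + Real.log (X + 1)) * ∑ n ∈ Ioc 0 X, (d + n) * ‖c n‖ ^ 2 := by
  classical
  have hd : (0 : ℝ) < d := mod_cast NeZero.pos d
  set fiber : ZMod d → Finset ℕ := fun b => (Ioc 0 X).filter fun n : ℕ => (n : ZMod d) = b
  have hfiber : ∀ χ : DirichletCharacter ℂ d,
      ∑ n ∈ Ioc 0 X, c n * χ n = ∑ b, (∑ n ∈ fiber b, c n) * χ b := by
    intro χ
    rw [← sum_fiberwise (Ioc 0 X) (fun n : ℕ => (n : ZMod d))]
    refine sum_congr rfl fun b _ => ?_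
    rw [sum_mul]
    exact sum_congr rfl fun n hn => by rw [(mem_filter.1 hn).2]
  have hclass : ∀ b, ‖∑ n ∈ fiber b, c n‖ ^ 2 ≤
      (1 + Real.log (X + 1)) / d * ∑ n ∈ fiber b, (d + n) * ‖c n‖ ^ 2 := by
    intro b
    calc ‖∑ n ∈ fiber b, c n‖ ^ 2
      _ ≤ (∑ n ∈ fiber b, ‖c n‖) ^ 2 := by gcongr; exact norm_sum_le _ _
      _ ≤ (∑ n ∈ fiber b, ((d : ℝ) + n)⁻¹) * ∑ n ∈ fiber b, (d + n) * ‖c n‖ ^ 2 :=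
          sum_sq_le_sum_mul_sum_of_sq_le_mul _ (fun n _ => by positivity)
            (fun n _ => by positivity) fun n _ => by field_simp; rfl
      _ ≤ _ := by
          gcongr
          exact sum_inv_add_le_of_natCast_eq X b
  simp only [hfiber]
  refine (sum_norm_sum_sq_le _).trans ?_
  calc (d : ℝ) * ∑ b, ‖∑ n ∈ fiber b, c n‖ ^ 2
      ≤ d * ∑ b, (1 + Real.log (X + 1)) / d * ∑ n ∈ fiber b, (d + n) * ‖c n‖ ^ 2 := by
        gcongr with b; exact hclass b
    _ = (1 + Real.log (X + 1)) * ∑ n ∈ Ioc 0 X, (d + n) * ‖c n‖ ^ 2 := by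
        rw [← mul_sum, sum_fiberwise (Ioc 0 X) (fun n : ℕ => (n : ZMod d))]
        field_simp

end LargeSieve

/-- The Dirichlet polynomial `∑_{1 ≤ n ≤ X} c(n) χ(n)` as a function of the character. Coefficients
are arithmetic functions, so that products of polynomials are Dirichlet convolutions. -/
noncomputable def charSum {d : ℕ} (c : ArithmeticFunction ℂ) (X : ℕ) (χ : DirichletCharacter ℂ d) :
    ℂ :=
  ∑ n ∈ Ioc 0 X, c n * χ n

section CharSum

variable {d : ℕ} {c c' : ArithmeticFunction ℂ} {X Y : ℕ}

lemma mul_apply_eq_zero_of_lt (hc : ∀ n, X < n → c n = 0) (hc' : ∀ n, Y < n → c' n = 0) {n : ℕ}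
    (hn : X * Y < n) : (c * c') n = 0 := by
  rw [ArithmeticFunction.mul_apply]
  refine sum_eq_zero fun p hp => ?_
  rcases lt_or_ge X p.1 with hX | hX
  · rw [hc _ hX, zero_mul]
  · have hY : Y < p.2 := by
      by_contra! hY
      exact hn.not_ge ((Nat.mem_divisorsAntidiagonal.1 hp).1 ▸ Nat.mul_le_mul hX hY)
    rw [hc' _ hY, mul_zero]

lemma charSum_mul (hc : ∀ n, X < n → c n = 0) (hc' : ∀ n, Y < n → c' n = 0)
    (χ : DirichletCharacter ℂ d) :
    charSum c X χ * charSum c' Y χ = charSum (c * c') (X * Y) χ := by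
  have hconv : ∀ n ∈ Ioc 0 (X * Y), (c * c') n * χ n =
      ∑ p ∈ Ioc 0 (X * Y) ×ˢ Ioc 0 (X * Y) with p.1 * p.2 = n,
        c p.1 * χ p.1 * (c' p.2 * χ p.2) := by
    intro n hn
    have hn := mem_Ioc.1 hn
    rw [ArithmeticFunction.mul_apply,
      Nat.divisorsAntidiagonal_eq_prod_filter_of_le hn.1.ne' hn.2, sum_mul]
    refine sum_congr rfl fun p hp => ?_
    rw [← (mem_filter.1 hp).2, Nat.cast_mul, map_mul, mul_mul_mul_comm]
  have hsub : Ioc 0 X ×ˢ Ioc 0 Y ⊆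
      {p ∈ Ioc 0 (X * Y) ×ˢ Ioc 0 (X * Y) | p.1 * p.2 ∈ Ioc 0 (X * Y)} := by
    intro p hp
    simp only [mem_product, mem_Ioc, mem_filter] at hp ⊢
    obtain ⟨⟨h1, hX⟩, h2, hY⟩ := hp
    exact ⟨⟨⟨h1, hX.trans (Nat.le_mul_of_pos_right X (h2.trans_le hY))⟩,
      h2, hY.trans (Nat.le_mul_of_pos_left Y (h1.trans_le hX))⟩,
      Nat.mul_pos h1 h2, Nat.mul_le_mul hX hY⟩
  rw [charSum, charSum, charSum, sum_congr rfl hconv, sum_fiberwise_eq_sum_filter,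
    sum_mul_sum, ← sum_product']
  refine sum_subset hsub fun p hp hp' => ?_
  simp only [mem_product, mem_Ioc, mem_filter, not_and, not_le] at hp hp'
  rcases lt_or_ge X p.1 with hX | hX
  · rw [hc _ hX, zero_mul, zero_mul]
  · rw [hc' _ (hp' ⟨hp.1.1.1, hX⟩ hp.1.2.1), zero_mul, mul_zero]

lemma norm_mul_apply_le {w : ℕ → ℝ} (hw : ∀ n, 0 ≤ w n) {f g : ArithmeticFunction ℝ} {V : ℝ}
    (h : ∀ m n, w (m * n) * (‖c m‖ * ‖c' n‖) ≤ V * (f m * g n)) (n : ℕ) :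
    w n * ‖(c * c') n‖ ≤ V * (f * g) n := by
  rw [ArithmeticFunction.mul_apply, ArithmeticFunction.mul_apply, mul_sum]
  refine (mul_le_mul_of_nonneg_left (norm_sum_le _ _) (hw n)).trans ?_
  rw [mul_sum]
  refine sum_le_sum fun p hp => ?_
  rw [norm_mul, ← (Nat.mem_divisorsAntidiagonal.1 hp).1]
  exact h p.1 p.2

section Prod

variable {ι : Type*} {c : ι → ArithmeticFunction ℂ} {X : ι → ℕ}

lemma prod_apply_eq_zero_of_lt (S : Finset ι) (hc : ∀ j ∈ S, ∀ n, X j < n → c j n = 0) :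
    ∀ n, ∏ j ∈ S, X j < n → (∏ j ∈ S, c j) n = 0 := by
  classical
  induction S using Finset.induction_on with
  | empty => exact fun n hn => by simp_all [ArithmeticFunction.one_apply_ne hn.ne']
  | insert j S hj ih =>
    rw [prod_insert hj, prod_insert hj]
    exact fun n => mul_apply_eq_zero_of_lt (hc j (mem_insert_self j S))
      (ih fun i hi => hc i (mem_insert_of_mem hi))

lemma prod_charSum (S : Finset ι) (hc : ∀ j ∈ S, ∀ n, X j < n → c j n = 0)
    (χ : DirichletCharacter ℂ d) :
    ∏ j ∈ S, charSum (c j) (X j) χ = charSum (∏ j ∈ S, c j) (∏ j ∈ S, X j) χ := by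
  classical
  induction S using Finset.induction_on with
  | empty =>
    have hIoc : Ioc 0 1 = ({1} : Finset ℕ) := rfl
    simp [charSum, hIoc]
  | insert j S hj ih =>
    have hS : ∀ i ∈ S, ∀ n, X i < n → c i n = 0 := fun i hi => hc i (mem_insert_of_mem hi)
    rw [prod_insert hj, prod_insert hj, prod_insert hj, ih hS,
      charSum_mul (hc j (mem_insert_self j S)) (prod_apply_eq_zero_of_lt S hS)]

lemma norm_prod_apply_le (S : Finset ι) {f : ArithmeticFunction ℝ} {V : ℝ}
    (hc : ∀ j ∈ S, ∀ n, ‖c j n‖ ≤ V * f n) (n : ℕ) :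
    ‖(∏ j ∈ S, c j) n‖ ≤ V ^ #S * (f ^ #S) n := by
  classical
  induction S using Finset.induction_on generalizing n with
  | empty =>
    simp only [prod_empty, card_empty, pow_zero, one_mul, ArithmeticFunction.one_apply]
    split_ifs <;> simp
  | insert j S hj ih =>
    have hj' := hc j (mem_insert_self j S)
    have hS := ih fun i hi => hc i (mem_insert_of_mem hi)
    rw [prod_insert hj, card_insert_of_notMem hj, pow_succ', pow_succ', ← one_mul ‖_‖]
    refine norm_mul_apply_le (w := 1) (fun _ => zero_le_one) (fun m n => ?_) n
    rw [Pi.one_apply, one_mul, mul_mul_mul_comm]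
    exact mul_le_mul (hj' m) (hS n) (norm_nonneg _) ((norm_nonneg _).trans (hj' m))

end Prod

lemma sum_norm_charSum_sq_le [NeZero d] {V : ℝ} {k : ℕ}
    (hc : ∀ n ∈ Ioc 0 X, √(d + n) * ‖c n‖ ≤ V * (invSqrt ^ k) n) :
    ∑ χ : DirichletCharacter ℂ d, ‖charSum c X χ‖ ^ 2 ≤
      V ^ 2 * (1 + Real.log (X + 1)) ^ (k * k + 1) := by
  have hterm : ∀ n ∈ Ioc 0 X,
      (d + n) * ‖c n‖ ^ 2 ≤ V ^ 2 * ((invSqrt ^ k) n * (invSqrt ^ k) n) := by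
    intro n hn
    calc (d + n) * ‖c n‖ ^ 2 = (√(d + n) * ‖c n‖) ^ 2 := by
          rw [mul_pow, Real.sq_sqrt (by positivity)]
      _ ≤ (V * (invSqrt ^ k) n) ^ 2 := pow_le_pow_left₀ (by positivity) (hc n hn) 2
      _ = V ^ 2 * ((invSqrt ^ k) n * (invSqrt ^ k) n) := by ring
  have hlog : 0 ≤ Real.log X := Real.log_natCast_nonneg X
  have hlog_succ : 0 ≤ Real.log (X + 1) := mod_cast Real.log_natCast_nonneg (X + 1)
  have hlog_le : Real.log X ≤ Real.log (X + 1) := by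
    rcases X.eq_zero_or_pos with rfl | hX
    · simp
    · exact Real.log_le_log (mod_cast hX) (by linarith)
  calc ∑ χ : DirichletCharacter ℂ d, ‖charSum c X χ‖ ^ 2
      ≤ (1 + Real.log (X + 1)) * ∑ n ∈ Ioc 0 X, (d + n) * ‖c n‖ ^ 2 :=
        sum_norm_sum_Ioc_sq_le X c
    _ ≤ (1 + Real.log (X + 1)) * (V ^ 2 * (1 + Real.log X) ^ (k * k)) := by
        have := sum_invSqrt_pow_mul_self_le k X
        refine mul_le_mul_of_nonneg_left ((sum_le_sum hterm).trans ?_) (by positivity)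
        rw [← mul_sum]
        gcongr
    _ ≤ (1 + Real.log (X + 1)) * (V ^ 2 * (1 + Real.log (X + 1)) ^ (k * k)) := by gcongr
    _ = V ^ 2 * (1 + Real.log (X + 1)) ^ (k * k + 1) := by ring

end CharSum

/-- The arithmetic function equal to `F` on `(A, B]` and to zero elsewhere. -/
noncomputable def cutoff (F : ℕ → ℂ) (A B : ℕ) : ArithmeticFunction ℂ where
  toFun n := if n ∈ Ioc A B then F n else 0
  map_zero' := by simp

section Cutoff

variable {F : ℕ → ℂ} {A B : ℕ}

lemma cutoff_apply (n : ℕ) : cutoff F A B n = if n ∈ Ioc A B then F n else 0 := rfl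

lemma cutoff_apply_of_lt {n : ℕ} (hn : B < n) : cutoff F A B n = 0 :=
  if_neg fun h => hn.not_ge (mem_Ioc.1 h).2

lemma charSum_cutoff {d : ℕ} (χ : DirichletCharacter ℂ d) :
    charSum (cutoff F A B) B χ = ∑ n ∈ Ioc A B, F n * χ n := by
  have hfilter : {n ∈ Ioc 0 B | n ∈ Ioc A B} = Ioc A B :=
    filter_mem_eq_inter.trans (inter_eq_right.2 (Ioc_subset_Ioc_left A.zero_le))
  simp only [charSum, cutoff_apply, ite_mul, zero_mul]
  rw [← sum_filter, hfilter]

end Cutoff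

/-- The Dirichlet polynomial `∑_{M < n ≤ 2M} a(n) χ(n) n^{-1/2-it}`. -/
noncomputable def blockSum {d : ℕ} (a : ℕ → ℂ) (M t : ℝ) (χ : DirichletCharacter ℂ d) : ℂ :=
  ∑ n ∈ Ioc ⌊M⌋₊ ⌊2 * M⌋₊, a n * χ (n : ZMod d) * (n : ℂ) ^ (-(1 / 2 : ℂ) - Complex.I * t)

/-- The coefficients `a(n) n^{-1/2-it}` of `blockSum`. -/
noncomputable def twist (a : ℕ → ℂ) (t : ℝ) (n : ℕ) : ℂ :=
  a n * (n : ℂ) ^ (-(1 / 2 : ℂ) - Complex.I * t)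

/-- The coefficients of `blockSum a M t`, extended by zero off `(M, 2M]`. -/
noncomputable def blockCoeff (a : ℕ → ℂ) (M t : ℝ) : ArithmeticFunction ℂ :=
  cutoff (twist a t) ⌊M⌋₊ ⌊2 * M⌋₊

lemma norm_ofReal_cpow_neg_half_sub {x : ℝ} (hx : 0 < x) (t : ℝ) :
    ‖(x : ℂ) ^ (-(1 / 2 : ℂ) - Complex.I * t)‖ = (√x)⁻¹ := by
  have hre : (-(1 / 2 : ℂ) - Complex.I * t).re = -(1 / 2) := by simp
  rw [Complex.norm_cpow_eq_rpow_re_of_pos hx, hre, Real.sqrt_eq_rpow, ← Real.rpow_neg hx.le]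

lemma norm_twist (a : ℕ → ℂ) (t : ℝ) {n : ℕ} (hn : 0 < n) : ‖twist a t n‖ = ‖a n‖ * (√n)⁻¹ := by
  rw [twist, norm_mul, ← Complex.ofReal_natCast, norm_ofReal_cpow_neg_half_sub (mod_cast hn)]

section Block

variable {a : ℕ → ℂ} {M t : ℝ}

lemma blockSum_eq_sum {d : ℕ} (χ : DirichletCharacter ℂ d) : blockSum a M t χ =
    ∑ n ∈ Ioc ⌊M⌋₊ ⌊2 * M⌋₊, twist a t n * χ n :=
  sum_congr rfl fun _ _ => mul_right_comm _ _ _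

lemma blockSum_eq_charSum {d : ℕ} (χ : DirichletCharacter ℂ d) :
    blockSum a M t χ = charSum (blockCoeff a M t) ⌊2 * M⌋₊ χ := by
  rw [blockCoeff, charSum_cutoff, blockSum_eq_sum]

lemma norm_blockCoeff_le {H : ℝ} (hH : 0 ≤ H)
    (ha : ∀ n ∈ Ioc ⌊M⌋₊ ⌊2 * M⌋₊, ‖a n‖ ≤ H) (n : ℕ) :
    ‖blockCoeff a M t n‖ ≤ H * invSqrt n := by
  rw [blockCoeff, cutoff_apply]
  split_ifs with hn
  · rw [norm_twist a t (Nat.zero_lt_of_lt (mem_Ioc.1 hn).1)]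
    exact mul_le_mul_of_nonneg_right (ha n hn) (invSqrt_nonneg n)
  · rw [norm_zero]
    exact mul_nonneg hH (invSqrt_nonneg n)

end Block

section Duality

variable {d : ℕ} [NeZero d] {χ : DirichletCharacter ℂ d}

lemma star_gaussSum_mul_self (hχ : χ.IsPrimitive) :
    star (gaussSum χ ZMod.stdAddChar) * gaussSum χ ZMod.stdAddChar = d := by
  set ψ : AddChar (ZMod d) ℂ := ZMod.stdAddChar
  calc star (gaussSum χ ψ) * gaussSum χ ψ
      = ∑ a, ψ (-a) * gaussSum χ (ψ.mulShift a) := by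
        rw [star_gaussSum_eq, gaussSum, sum_mul]
        refine sum_congr rfl fun a _ => ?_
        rw [gaussSum_mulShift_of_isPrimitive ψ hχ, AddChar.inv_apply]
        ring
    _ = ∑ x, χ x * ∑ a, ψ (a * (x - 1)) := by
        simp only [gaussSum, mul_sum]
        rw [sum_comm]
        refine sum_congr rfl fun x _ => sum_congr rfl fun a _ => ?_
        rw [AddChar.mulShift_apply, mul_sub_one, sub_eq_neg_add, AddChar.map_add_eq_mul]
        ring
    _ = d := by
        simp [AddChar.sum_mulShift _ (ZMod.isPrimitive_stdAddChar d), sub_eq_zero, ψ]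

lemma norm_gaussSum (hχ : χ.IsPrimitive) : ‖gaussSum χ ZMod.stdAddChar‖ = √d := by
  rw [eq_comm, Real.sqrt_eq_iff_mul_self_eq d.cast_nonneg (norm_nonneg _)]
  have h := congrArg norm (star_gaussSum_mul_self hχ)
  rw [norm_mul, norm_star, Complex.norm_natCast] at h
  exact h.symm

/-- The finite Fourier transform of the conjugate of `g` restricted to `s`, normalised so that
`∑_{n ∈ s} g(n) χ(n)` and `∑_b dualCoeff g s b χ(b)` have the same modulus for primitive `χ`. -/
noncomputable def dualCoeff (g : ℕ → ℂ) (s : Finset ℕ) (b : ZMod d) : ℂ :=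
  (√d : ℂ)⁻¹ * ∑ n ∈ s, star (g n) * ZMod.stdAddChar b ^ n

lemma norm_sum_eq_norm_sum_dualCoeff (hχ : χ.IsPrimitive) (g : ℕ → ℂ) (s : Finset ℕ) :
    ‖∑ n ∈ s, g n * χ n‖ = ‖∑ b, dualCoeff g s b * χ b‖ := by
  have hd : (0 : ℝ) < √d := Real.sqrt_pos.2 (mod_cast NeZero.pos d)
  have hdual : star (∑ n ∈ s, g n * χ n) * gaussSum χ ZMod.stdAddChar =
      √d * ∑ b, dualCoeff g s b * χ b := by
    calc star (∑ n ∈ s, g n * χ n) * gaussSum χ ZMod.stdAddChar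
        = ∑ n ∈ s, star (g n) * gaussSum χ (ZMod.stdAddChar.mulShift n) := by
          rw [star_sum, sum_mul]
          refine sum_congr rfl fun n _ => ?_
          rw [gaussSum_mulShift_of_isPrimitive _ hχ, star_mul', MulChar.star_apply', mul_assoc]
      _ = ∑ b, (∑ n ∈ s, star (g n) * ZMod.stdAddChar b ^ n) * χ b := by
          simp only [gaussSum, mul_sum, sum_mul]
          rw [sum_comm]
          refine sum_congr rfl fun b _ => sum_congr rfl fun n _ => ?_
          rw [AddChar.mulShift_apply, ← nsmul_eq_mul, AddChar.map_nsmul_eq_pow]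
          ring
      _ = √d * ∑ b, dualCoeff g s b * χ b := by
          rw [mul_sum]
          refine sum_congr rfl fun b _ => ?_
          rw [dualCoeff, ← mul_assoc, ← mul_assoc, mul_inv_cancel₀ (mod_cast hd.ne'), one_mul]
  have hnorm := congrArg norm hdual
  rw [norm_mul, norm_mul, norm_star, norm_gaussSum hχ, Complex.norm_of_nonneg hd.le, mul_comm]
    at hnorm
  exact mul_left_cancel₀ hd.ne' hnorm

lemma sum_univ_zmod_eq_sum_range (F : ZMod d → ℂ) : ∑ b, F b = ∑ n ∈ range d, F n :=
  (sum_nbij' (fun b : ZMod d => b.val) (fun n : ℕ => (n : ZMod d))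
    (fun b _ => mem_range.2 b.val_lt) (fun _ _ => mem_univ _)
    (fun b _ => ZMod.natCast_zmod_val b) (fun _ hn => ZMod.val_cast_of_lt (mem_range.1 hn))
    fun b _ => by rw [ZMod.natCast_zmod_val])

lemma sum_mul_apply_eq_fold (hd : 2 ≤ d) (χ : DirichletCharacter ℂ d) (G : ZMod d → ℂ) :
    ∑ b, G b * χ b = ∑ n ∈ Ioc 0 (d / 2), G n * χ n +
      χ (-1) * ∑ n ∈ Ioc 0 ((d - 1) / 2), G (-n) * χ n := by
  have : Fact (1 < d) := ⟨hd⟩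
  have hrange : range d = insert 0 (Ioc 0 (d / 2) ∪ Ioc (d / 2) (d - 1)) := by
    ext n; simp only [mem_range, mem_insert, mem_union, mem_Ioc]; omega
  have hdisj : Disjoint (Ioc 0 (d / 2)) (Ioc (d / 2) (d - 1)) :=
    Ioc_disjoint_Ioc_of_le le_rfl
  rw [sum_univ_zmod_eq_sum_range, hrange, sum_insert (by simp), sum_union hdisj, Nat.cast_zero,
    MulChar.map_nonunit χ not_isUnit_zero, mul_zero, zero_add, mul_sum]
  congr 1
  refine sum_nbij' (d - ·) (d - ·) ?_ ?_ ?_ ?_ fun n hn => ?_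
  iterate 4 intro n hn; simp only [mem_Ioc] at hn ⊢; omega
  have hcast : ((d - n : ℕ) : ZMod d) = -n := by
    rw [Nat.cast_sub (by have := mem_Ioc.1 hn; omega), ZMod.natCast_self, zero_sub]
  rw [hcast, neg_neg, mul_left_comm, ← map_mul, neg_one_mul, neg_neg]

lemma norm_sum_mul_apply_le_fold (hd : 2 ≤ d) (χ : DirichletCharacter ℂ d) (G : ZMod d → ℂ) :
    ‖∑ b, G b * χ b‖ ≤ ‖charSum (cutoff (fun n => G n) 0 (d / 2)) (d / 2) χ‖ +
      ‖charSum (cutoff (fun n => G (-n)) 0 ((d - 1) / 2)) ((d - 1) / 2) χ‖ := by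
  rw [charSum_cutoff, charSum_cutoff, sum_mul_apply_eq_fold hd]
  refine (norm_add_le _ _).trans_eq ?_
  have hnorm : ‖χ (-1)‖ = 1 := by simpa using χ.unit_norm_eq_one (-1)
  rw [norm_mul, hnorm, one_mul]

end Duality

lemma sub_one_mul_sum_mul_pow {R : Type*} [CommRing R] (f : ℕ → R) (z : R) {A B : ℕ}
    (hAB : A ≤ B) : (z - 1) * ∑ n ∈ Ioc A B, f n * z ^ n =
      f (B + 1) * z ^ (B + 1) - f (A + 1) * z ^ (A + 1) -
        ∑ n ∈ Ioc A B, (f (n + 1) - f n) * z ^ (n + 1) := by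
  induction B, hAB using Nat.le_induction with
  | base => simp
  | succ B hAB ih =>
    rw [sum_Ioc_succ_top (by omega), sum_Ioc_succ_top (by omega), mul_add, ih]
    ring

lemma norm_sub_one_mul_sum_mul_pow_le {f : ℕ → ℂ} {z : ℂ} (hz : ‖z‖ = 1) {A B : ℕ} (hAB : A ≤ B)
    {v w : ℝ} (hv : ∀ n ∈ Ioc A (B + 1), ‖f n‖ ≤ v)
    (hw : ∀ n ∈ Ioc A B, ‖f (n + 1) - f n‖ ≤ w) :
    ‖z - 1‖ * ‖∑ n ∈ Ioc A B, f n * z ^ n‖ ≤ 2 * v + (B - A : ℕ) * w := by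
  have hmul : ∀ (x : ℂ) (n : ℕ), ‖x * z ^ n‖ = ‖x‖ := fun x n => by simp [hz]
  rw [← norm_mul, sub_one_mul_sum_mul_pow f z hAB]
  refine (norm_sub_le _ _).trans (add_le_add ((norm_sub_le _ _).trans ?_) ?_)
  · rw [hmul, hmul, two_mul]
    exact add_le_add (hv _ (mem_Ioc.2 ⟨by omega, le_rfl⟩)) (hv _ (mem_Ioc.2 ⟨by omega, by omega⟩))
  · rw [← Nat.card_Ioc, ← nsmul_eq_mul]
    exact (norm_sum_le _ _).trans (sum_le_card_nsmul _ _ _ fun n hn => by rw [hmul]; exact hw n hn)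

lemma four_mul_div_le_norm_stdAddChar_sub_one {d : ℕ} [NeZero d] {b : ℕ} (hb : 2 * b ≤ d) :
    4 * (b : ℝ) / d ≤ ‖(ZMod.stdAddChar (b : ZMod d) : ℂ) - 1‖ := by
  have hd : (0 : ℝ) < d := mod_cast NeZero.pos d
  have hchar : (ZMod.stdAddChar (b : ZMod d) : ℂ) =
      Complex.exp (Complex.I * ((2 * (π * (b / d)) : ℝ) : ℂ)) := by
    rw [← Int.cast_natCast, ZMod.stdAddChar_coe]
    congr 1
    push_cast
    ring
  have hhalf : (b : ℝ) / d ≤ 1 / 2 := by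
    rw [div_le_div_iff₀ hd two_pos]
    exact_mod_cast (by omega : b * 2 ≤ 1 * d)
  have hjordan := Real.mul_le_sin (x := π * (b / d)) (by positivity)
    (by nlinarith [Real.pi_pos])
  rw [hchar, Complex.norm_exp_I_mul_ofReal_sub_one, mul_div_cancel_left₀ _ two_ne_zero]
  calc 4 * (b : ℝ) / d = 2 * (2 / π * (π * (b / d))) := by field_simp; ring
    _ ≤ 2 * Real.sin (π * (b / d)) := by gcongr
    _ ≤ ‖2 * Real.sin (π * (b / d))‖ := Real.le_norm_self _

/-- Coefficients interpolated by a differentiable function `α` with `|α(x)| ≤ 1 + log x` and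
`|α'(x)| ≤ 1/x` on `[1, ∞)`: the ones for which summation by parts is efficient. -/
def IsSmoothCoeff (a : ℕ → ℂ) : Prop :=
  ∃ α α' : ℝ → ℂ, (∀ n : ℕ, a n = α n) ∧
    ∀ x : ℝ, 1 ≤ x → HasDerivAt α (α' x) x ∧ ‖α x‖ ≤ 1 + Real.log x ∧ ‖α' x‖ ≤ x⁻¹

lemma isSmoothCoeff_one : IsSmoothCoeff fun _ => 1 := by
  refine ⟨fun _ => 1, fun _ => 0, fun _ => rfl, fun x hx => ⟨hasDerivAt_const _ _, ?_, ?_⟩⟩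
  · rw [norm_one]; linarith [Real.log_nonneg hx]
  · rw [norm_zero]; positivity

lemma isSmoothCoeff_log : IsSmoothCoeff fun n => (Real.log n : ℂ) := by
  refine ⟨fun x => (Real.log x : ℂ), fun x => ((x⁻¹ : ℝ) : ℂ), fun _ => rfl, fun x hx =>
    ⟨(Real.hasDerivAt_log (by positivity)).ofReal_comp, ?_, ?_⟩⟩
  · rw [Complex.norm_of_nonneg (Real.log_nonneg hx)]; linarith
  · rw [Complex.norm_of_nonneg (by positivity)]

lemma isSmoothCoeff_of_eq_one_or_log {a : ℕ → ℂ}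
    (ha : (a = fun _ => (1 : ℂ)) ∨ a = fun n : ℕ => (Real.log n : ℂ)) : IsSmoothCoeff a := by
  rcases ha with rfl | rfl
  exacts [isSmoothCoeff_one, isSmoothCoeff_log]

lemma IsSmoothCoeff.norm_le {a : ℕ → ℂ} (ha : IsSmoothCoeff a) {n : ℕ} (hn : 1 ≤ n) :
    ‖a n‖ ≤ 1 + Real.log n := by
  obtain ⟨α, α', haα, hα⟩ := ha
  exact haα n ▸ (hα n (mod_cast hn)).2.1

section Variation

variable {a : ℕ → ℂ} {M t H : ℝ}

lemma norm_neg_half_sub_le (t : ℝ) : ‖-(1 / 2 : ℂ) - Complex.I * t‖ ≤ 1 / 2 + |t| := by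
  refine (norm_sub_le _ _).trans_eq ?_
  simp

lemma IsSmoothCoeff.norm_twist_le (ha : IsSmoothCoeff a) (hM : 1 ≤ M) {n : ℕ} (hMn : M ≤ n)
    (hH : 1 + Real.log n ≤ H) : ‖twist a t n‖ ≤ H / √M := by
  have hn : (1 : ℝ) ≤ n := hM.trans hMn
  have hH0 : 0 ≤ H := by linarith [Real.log_nonneg hn]
  rw [norm_twist a t (mod_cast hn), div_eq_mul_inv]
  gcongr
  exact (ha.norm_le (mod_cast hn)).trans hH

lemma hasDerivAt_mul_ofReal_cpow {α : ℝ → ℂ} {α' : ℂ} {x : ℝ} (hα : HasDerivAt α α' x)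
    (hx : 0 < x) (s : ℂ) : HasDerivAt (fun y : ℝ => α y * (y : ℂ) ^ s)
      (α' * (x : ℂ) ^ s + α x * (s * (x : ℂ) ^ (s - 1))) x := by
  have hcpow := ((hasDerivAt_id (x : ℂ)).cpow_const (c := s)
    (Or.inl (by simpa using hx))).comp_ofReal
  exact hα.mul (by simpa using hcpow)

lemma norm_mul_cpow_add_mul_cpow_sub_one_le {z w : ℂ} {x : ℝ} (hM : 0 < M) (hMx : M ≤ x)
    (hH : 1 ≤ H) (hz : ‖z‖ ≤ H) (hw : ‖w‖ ≤ x⁻¹) (t : ℝ) :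
    ‖w * (x : ℂ) ^ (-(1 / 2 : ℂ) - Complex.I * t) + z * ((-(1 / 2 : ℂ) - Complex.I * t) *
      (x : ℂ) ^ (-(1 / 2 : ℂ) - Complex.I * t - 1))‖ ≤ H * (3 / 2 + |t|) / (M * √M) := by
  have hx : 0 < x := hM.trans_le hMx
  set s : ℂ := -(1 / 2 : ℂ) - Complex.I * t
  have hcpow : ‖(x : ℂ) ^ s‖ = (√x)⁻¹ := norm_ofReal_cpow_neg_half_sub hx t
  have hcpow_sub : ‖(x : ℂ) ^ (s - 1)‖ = x⁻¹ * (√x)⁻¹ := by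
    rw [Complex.cpow_sub _ _ (mod_cast hx.ne'), Complex.cpow_one, norm_div,
      Complex.norm_of_nonneg hx.le, hcpow, div_eq_inv_mul]
  calc ‖w * (x : ℂ) ^ s + z * (s * (x : ℂ) ^ (s - 1))‖
      ≤ ‖w‖ * (√x)⁻¹ + ‖z‖ * (‖s‖ * (x⁻¹ * (√x)⁻¹)) := by
        refine (norm_add_le _ _).trans_eq ?_
        rw [norm_mul, norm_mul, norm_mul, hcpow_sub, hcpow]
    _ ≤ H * x⁻¹ * (√x)⁻¹ + H * ((1 / 2 + |t|) * (x⁻¹ * (√x)⁻¹)) := by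
        gcongr
        · exact hw.trans (le_mul_of_one_le_left (by positivity) hH)
        · exact norm_neg_half_sub_le t
    _ = H * (3 / 2 + |t|) / (x * √x) := by field_simp; ring
    _ ≤ H * (3 / 2 + |t|) / (M * √M) := by gcongr

lemma IsSmoothCoeff.norm_twist_succ_sub_le (ha : IsSmoothCoeff a) (hM : 1 ≤ M) {n : ℕ}
    (hMn : M ≤ n) (hH : 1 + Real.log (n + 1) ≤ H) :
    ‖twist a t (n + 1) - twist a t n‖ ≤ H * (3 / 2 + |t|) / (M * √M) := by
  obtain ⟨α, α', haα, hα⟩ := ha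
  have hM0 : 0 < M := by linarith
  have hmvt := norm_image_sub_le_of_norm_deriv_le_segment'
    (f := fun x : ℝ => α x * (x : ℂ) ^ (-(1 / 2 : ℂ) - Complex.I * t))
    (a := n) (b := n + 1) (C := H * (3 / 2 + |t|) / (M * √M))
    (fun x hx => (hasDerivAt_mul_ofReal_cpow (hα x (by linarith [hx.1])).1
      (by linarith [hx.1]) _).hasDerivWithinAt)
    (fun x hx => by
      have hMx : M ≤ x := hMn.trans hx.1
      have hlog : Real.log x ≤ Real.log (n + 1) :=
        Real.log_le_log (hM0.trans_le hMx) hx.2.le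
      obtain ⟨-, hαx, hα'x⟩ := hα x (hM.trans hMx)
      exact norm_mul_cpow_add_mul_cpow_sub_one_le hM0 hMx
        (by linarith [Real.log_nonneg (hM.trans hMx)]) (by linarith) hα'x t)
    (n + 1) (Set.right_mem_Icc.2 (by linarith))
  simpa [twist, haα] using hmvt

end Variation

section DualCoeff

variable {a : ℕ → ℂ} {M t H : ℝ}

lemma le_and_log_le_of_mem_Ioc_floor (hM : 0 < M) {n : ℕ}
    (hn : n ∈ Ioc ⌊M⌋₊ (⌊2 * M⌋₊ + 1)) : M ≤ n ∧ Real.log n ≤ Real.log (2 * M + 1) := by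
  obtain ⟨hMn, hn⟩ := mem_Ioc.1 hn
  have hMn : M ≤ n := (Nat.lt_of_floor_lt hMn).le
  have hfloor : (⌊2 * M⌋₊ : ℝ) ≤ 2 * M := Nat.floor_le (by positivity)
  have hn : (n : ℝ) ≤ ⌊2 * M⌋₊ + 1 := mod_cast hn
  exact ⟨hMn, Real.log_le_log (hM.trans_le hMn) (by linarith)⟩

lemma natCast_floor_two_mul_sub_le (hM : 0 < M) : ((⌊2 * M⌋₊ - ⌊M⌋₊ : ℕ) : ℝ) ≤ 2 * M :=
  (Nat.cast_le.2 (Nat.sub_le _ _)).trans (Nat.floor_le (by positivity))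

lemma IsSmoothCoeff.norm_sum_star_twist_mul_pow_le (ha : IsSmoothCoeff a) (hM : 1 ≤ M)
    (hH : 1 + Real.log (2 * M + 1) ≤ H) {z : ℂ} (hz : ‖z‖ = 1) :
    ‖∑ n ∈ Ioc ⌊M⌋₊ ⌊2 * M⌋₊, star (twist a t n) * z ^ n‖ ≤ 2 * H * √M := by
  have hM0 : 0 < M := by linarith
  have hH0 : 0 ≤ H := by linarith [Real.log_nonneg (by linarith : 1 ≤ 2 * M + 1)]
  have hterm : ∀ n ∈ Ioc ⌊M⌋₊ ⌊2 * M⌋₊, ‖star (twist a t n) * z ^ n‖ ≤ H / √M := by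
    intro n hn
    obtain ⟨hMn, hlog⟩ :=
      le_and_log_le_of_mem_Ioc_floor hM0 (Ioc_subset_Ioc_right (Nat.le_succ _) hn)
    rw [norm_mul, norm_pow, hz, one_pow, mul_one, norm_star]
    exact ha.norm_twist_le hM hMn (by linarith)
  calc ‖∑ n ∈ Ioc ⌊M⌋₊ ⌊2 * M⌋₊, star (twist a t n) * z ^ n‖
      ≤ (⌊2 * M⌋₊ - ⌊M⌋₊ : ℕ) * (H / √M) := by
        rw [← Nat.card_Ioc, ← nsmul_eq_mul]
        exact (norm_sum_le _ _).trans (sum_le_card_nsmul _ _ _ hterm)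
    _ ≤ 2 * M * (H / √M) := by
        gcongr
        exact natCast_floor_two_mul_sub_le hM0
    _ = 2 * H * (M / √M) := by ring
    _ = 2 * H * √M := by rw [Real.div_sqrt]

lemma IsSmoothCoeff.norm_sub_one_mul_norm_sum_star_twist_mul_pow_le (ha : IsSmoothCoeff a)
    (hM : 1 ≤ M) (hH : 1 + Real.log (2 * M + 1) ≤ H) {z : ℂ} (hz : ‖z‖ = 1) :
    ‖z - 1‖ * ‖∑ n ∈ Ioc ⌊M⌋₊ ⌊2 * M⌋₊, star (twist a t n) * z ^ n‖ ≤
      5 * H * (1 + |t|) / √M := by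
  have hM0 : 0 < M := by linarith
  have hH0 : 0 ≤ H := by linarith [Real.log_nonneg (by linarith : 1 ≤ 2 * M + 1)]
  have hterm : ∀ n ∈ Ioc ⌊M⌋₊ (⌊2 * M⌋₊ + 1), ‖star (twist a t n)‖ ≤ H / √M := by
    intro n hn
    obtain ⟨hMn, hlog⟩ := le_and_log_le_of_mem_Ioc_floor hM0 hn
    rw [norm_star]
    exact ha.norm_twist_le hM hMn (by linarith)
  have hdiff : ∀ n ∈ Ioc ⌊M⌋₊ ⌊2 * M⌋₊, ‖star (twist a t (n + 1)) - star (twist a t n)‖ ≤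
      H * (3 / 2 + |t|) / (M * √M) := by
    intro n hn
    have hn := mem_Ioc.1 hn
    obtain ⟨-, hlog⟩ := le_and_log_le_of_mem_Ioc_floor hM0 (n := n + 1)
      (mem_Ioc.2 ⟨by omega, by omega⟩)
    rw [← star_sub, norm_star]
    refine ha.norm_twist_succ_sub_le hM (Nat.lt_of_floor_lt hn.1).le ?_
    push_cast at hlog
    linarith
  calc _ ≤ 2 * (H / √M) + (⌊2 * M⌋₊ - ⌊M⌋₊ : ℕ) * (H * (3 / 2 + |t|) / (M * √M)) :=
        norm_sub_one_mul_sum_mul_pow_le hz (Nat.floor_le_floor (by linarith)) hterm hdiff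
    _ ≤ 2 * (H / √M) + 2 * M * (H * (3 / 2 + |t|) / (M * √M)) := by
        gcongr
        exact natCast_floor_two_mul_sub_le hM0
    _ = H * (5 + 2 * |t|) / √M := by field_simp; ring
    _ ≤ H * (5 + 5 * |t|) / √M := by
        gcongr
        norm_num
    _ = 5 * H * (1 + |t|) / √M := by ring

lemma mul_add_mul_sq_le {d m n M T E : ℝ} (hd : 0 < d) (hm : 0 ≤ m) (hM : 0 < M) (hT : 0 ≤ T)
    (hE : 0 ≤ E) (hn : n ≤ 2 * M) (hsize : T ≤ E * √M) (hdecay : 4 * m / d * T ≤ E / √M) :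
    m * (d + m * n) * T ^ 2 ≤ (E * d) ^ 2 := by
  have hdecay : m * T * √M ≤ E * d / 4 := by
    rw [div_mul_eq_mul_div, div_le_div_iff₀ hd (by positivity)] at hdecay
    linarith
  have hfirst : m * T ^ 2 ≤ E * (E * d / 4) := by
    calc m * T ^ 2 = m * T * T := by ring
      _ ≤ m * T * (E * √M) := by gcongr
      _ = E * (m * T * √M) := by ring
      _ ≤ E * (E * d / 4) := by gcongr
  have hsecond : m ^ 2 * n * T ^ 2 ≤ 2 * (E * d / 4) ^ 2 := by
    calc m ^ 2 * n * T ^ 2 ≤ m ^ 2 * (2 * M) * T ^ 2 := by gcongr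
      _ = 2 * (m * T * √M) ^ 2 := by rw [mul_pow, Real.sq_sqrt hM.le]; ring
      _ ≤ 2 * (E * d / 4) ^ 2 := by gcongr
  calc m * (d + m * n) * T ^ 2 = d * (m * T ^ 2) + m ^ 2 * n * T ^ 2 := by ring
    _ ≤ d * (E * (E * d / 4)) + 2 * (E * d / 4) ^ 2 := by gcongr
    _ ≤ (E * d) ^ 2 := by nlinarith [sq_nonneg (E * d)]

lemma IsSmoothCoeff.sqrt_mul_norm_dualCoeff_le {d : ℕ} [NeZero d] (ha : IsSmoothCoeff a)
    (hM : 1 ≤ M) (hH : 1 + Real.log (2 * M + 1) ≤ H) {b : ZMod d} {m n : ℕ} (hm : 0 < m)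
    (hb : 4 * (m : ℝ) / d ≤ ‖(ZMod.stdAddChar b : ℂ) - 1‖) (hn : (n : ℝ) ≤ 2 * M) :
    √(d + (m * n : ℕ)) * ‖dualCoeff (twist a t) (Ioc ⌊M⌋₊ ⌊2 * M⌋₊) b‖ ≤
      5 * H * (1 + |t|) * √d * invSqrt m := by
  have hz : ‖(ZMod.stdAddChar b : ℂ)‖ = 1 := AddChar.norm_apply _ _
  have hd : (0 : ℝ) < d := mod_cast NeZero.pos d
  have hm : (0 : ℝ) < m := mod_cast hm
  have hM0 : 0 < M := by linarith
  have hH0 : 0 ≤ H := by linarith [Real.log_nonneg (by linarith : 1 ≤ 2 * M + 1)]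
  have hsize := ha.norm_sum_star_twist_mul_pow_le (t := t) hM hH hz
  have hdecay := ha.norm_sub_one_mul_norm_sum_star_twist_mul_pow_le (t := t) hM hH hz
  rw [dualCoeff, norm_mul, norm_inv, Complex.norm_of_nonneg (Real.sqrt_nonneg _), invSqrt_apply]
  set T : ℝ := ‖∑ n ∈ Ioc ⌊M⌋₊ ⌊2 * M⌋₊, star (twist a t n) * ZMod.stdAddChar b ^ n‖
  set E : ℝ := 5 * H * (1 + |t|)
  have hE0 : 0 ≤ E := by positivity
  have hHE : 2 * H ≤ E := by
    have := mul_nonneg hH0 (abs_nonneg t)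
    simp only [E]
    linarith
  have hsize : T ≤ E * √M := hsize.trans (by gcongr)
  have hdecay : 4 * (m : ℝ) / d * T ≤ E / √M :=
    (mul_le_mul_of_nonneg_right hb (norm_nonneg _)).trans hdecay
  have hsq := mul_add_mul_sq_le hd hm.le hM0 (norm_nonneg _) hE0 hn hsize hdecay
  have hsqrt : √m * √(d + (m * n : ℕ)) * T ≤ E * d := by
    refine le_of_sq_le_sq ?_ (by positivity)
    rw [mul_pow, mul_pow, Real.sq_sqrt hm.le, Real.sq_sqrt (by positivity)]
    exact_mod_cast hsq
  rw [← div_eq_mul_inv, le_div_iff₀ (by positivity), inv_mul_eq_div, mul_div_assoc',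
    div_mul_eq_mul_div, div_le_iff₀ (by positivity), mul_assoc E, Real.mul_self_sqrt hd.le]
  linarith

end DualCoeff

section SumPrimitive

variable {d : ℕ} {f g : DirichletCharacter ℂ d → ℝ}

open Classical in
lemma sumPrimitive_eq_sum (f : DirichletCharacter ℂ d → ℝ) :
    sumPrimitive d f = ∑ χ with χ.IsPrimitive, f χ := by
  rw [sumPrimitive, ← finsum_mem_coe_finset]
  simp

lemma sumPrimitive_nonneg (hf : ∀ χ, 0 ≤ f χ) : 0 ≤ sumPrimitive d f := by
  rw [sumPrimitive_eq_sum]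
  exact sum_nonneg fun χ _ => hf χ

lemma sumPrimitive_le_sum (hg : ∀ χ, 0 ≤ g χ)
    (hfg : ∀ χ : DirichletCharacter ℂ d, χ.IsPrimitive → f χ ≤ g χ) :
    sumPrimitive d f ≤ ∑ χ, g χ := by
  classical
  rw [sumPrimitive_eq_sum]
  exact (sum_le_sum fun χ hχ => hfg χ (mem_filter.1 hχ).2).trans
    (sum_le_sum_of_subset_of_nonneg (filter_subset _ _) fun χ _ _ => hg χ)

lemma sumPrimitive_norm_mul_sq_le {u v : DirichletCharacter ℂ d → ℂ} {A B : ℝ}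
    (hA : sumPrimitive d (fun χ => ‖u χ‖ ^ 2) ≤ A) (hB : sumPrimitive d (fun χ => ‖v χ‖ ^ 2) ≤ B) :
    sumPrimitive d (fun χ => ‖u χ * v χ‖) ^ 2 ≤ A * B := by
  have hA0 : 0 ≤ A := (sumPrimitive_nonneg fun χ => by positivity).trans hA
  have hB0 : 0 ≤ sumPrimitive d (fun χ => ‖v χ‖ ^ 2) := sumPrimitive_nonneg fun χ => by positivity
  refine le_trans ?_ (mul_le_mul hA hB hB0 hA0)
  simp only [sumPrimitive_eq_sum, norm_mul]
  exact sum_mul_sq_le_sq_mul_sq _ _ _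

end SumPrimitive

section DualMoment

variable {d : ℕ} [NeZero d] {u c : ArithmeticFunction ℂ} {X Y k : ℕ} {U V : ℝ}

lemma sum_norm_charSum_mul_charSum_sq_le (hu : ∀ m, X < m → u m = 0) (hc : ∀ n, Y < n → c n = 0)
    (hU : 0 ≤ U)
    (huY : ∀ m n, m ∈ Ioc 0 X → n ≤ Y → √(d + (m * n : ℕ)) * ‖u m‖ ≤ U * invSqrt m)
    (hcV : ∀ n, ‖c n‖ ≤ V * (invSqrt ^ k) n) :
    ∑ χ : DirichletCharacter ℂ d, ‖charSum u X χ * charSum c Y χ‖ ^ 2 ≤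
      (U * V) ^ 2 * (1 + Real.log (X * Y + 1)) ^ ((k + 1) * (k + 1) + 1) := by
  have hterm : ∀ m n, √(d + (m * n : ℕ)) * (‖u m‖ * ‖c n‖) ≤
      U * V * (invSqrt m * (invSqrt ^ k) n) := by
    intro m n
    have hV : 0 ≤ V * (invSqrt ^ k) n := (norm_nonneg _).trans (hcV n)
    by_cases hmn : m ∈ Ioc 0 X ∧ n ≤ Y
    · calc √(d + (m * n : ℕ)) * (‖u m‖ * ‖c n‖) = √(d + (m * n : ℕ)) * ‖u m‖ * ‖c n‖ := by ring
        _ ≤ U * invSqrt m * (V * (invSqrt ^ k) n) :=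
          mul_le_mul (huY m n hmn.1 hmn.2) (hcV n) (norm_nonneg _)
            (mul_nonneg hU (invSqrt_nonneg m))
        _ = U * V * (invSqrt m * (invSqrt ^ k) n) := by ring
    · have hzero : ‖u m‖ * ‖c n‖ = 0 := by
        rw [mul_eq_zero, norm_eq_zero, norm_eq_zero]
        by_contra! hne
        have hm0 : m ≠ 0 := by rintro rfl; exact hne.1 u.map_zero
        have hmX : m ≤ X := not_lt.1 fun h => hne.1 (hu m h)
        exact hmn ⟨mem_Ioc.2 ⟨hm0.bot_lt, hmX⟩, not_lt.1 fun h => hne.2 (hc n h)⟩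
      rw [hzero, mul_zero]
      calc 0 ≤ U * invSqrt m * (V * (invSqrt ^ k) n) :=
            mul_nonneg (mul_nonneg hU (invSqrt_nonneg m)) hV
        _ = U * V * (invSqrt m * (invSqrt ^ k) n) := by ring
  simp only [charSum_mul hu hc]
  rw [← Nat.cast_mul]
  refine sum_norm_charSum_sq_le fun n _ => ?_
  rw [pow_succ']
  exact norm_mul_apply_le (w := fun n => √(d + n)) (fun _ => Real.sqrt_nonneg _) hterm n

variable {a : ℕ → ℂ} {M t H : ℝ}

lemma IsSmoothCoeff.sum_norm_charSum_dualCoeff_mul_sq_le (ha : IsSmoothCoeff a) (hM : 1 ≤ M)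
    (hH : 1 + Real.log (2 * M + 1) ≤ H) (hY : (Y : ℝ) ≤ 2 * M) (hc : ∀ n, Y < n → c n = 0)
    (hcV : ∀ n, ‖c n‖ ≤ V * (invSqrt ^ k) n) (hX : 2 * X ≤ d) {e : ℕ → ZMod d}
    (he : ∀ m ∈ Ioc 0 X, 4 * (m : ℝ) / d ≤ ‖(ZMod.stdAddChar (e m) : ℂ) - 1‖) :
    ∑ χ : DirichletCharacter ℂ d, ‖charSum (cutoff (fun m =>
        dualCoeff (twist a t) (Ioc ⌊M⌋₊ ⌊2 * M⌋₊) (e m)) 0 X) X χ * charSum c Y χ‖ ^ 2 ≤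
      (5 * H * (1 + |t|) * √d * V) ^ 2 *
        (1 + Real.log (d * Y + 1)) ^ ((k + 1) * (k + 1) + 1) := by
  have hH0 : 0 ≤ H := by linarith [Real.log_nonneg (by linarith : 1 ≤ 2 * M + 1)]
  have hXd : (X : ℝ) ≤ d := mod_cast (by omega : X ≤ d)
  have hlog : 0 ≤ Real.log (X * Y + 1) := Real.log_nonneg (le_add_of_nonneg_left (by positivity))
  refine (sum_norm_charSum_mul_charSum_sq_le (U := 5 * H * (1 + |t|) * √d)
    (fun m => cutoff_apply_of_lt) hc (by positivity) (fun m n hm hn => ?_) hcV).trans (by gcongr)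
  rw [cutoff_apply, if_pos hm]
  exact ha.sqrt_mul_norm_dualCoeff_le hM hH (mem_Ioc.1 hm).1 (he m hm)
    ((Nat.cast_le.2 hn).trans hY)

lemma IsSmoothCoeff.sumPrimitive_norm_blockSum_mul_sq_le (hd : 2 ≤ d) (ha : IsSmoothCoeff a)
    (hM : 1 ≤ M) (hH : 1 + Real.log (2 * M + 1) ≤ H) (hY : (Y : ℝ) ≤ 2 * M)
    (hc : ∀ n, Y < n → c n = 0) (hcV : ∀ n, ‖c n‖ ≤ V * (invSqrt ^ k) n) :
    sumPrimitive d (fun χ => ‖blockSum a M t χ * charSum c Y χ‖ ^ 2) ≤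
      4 * ((5 * H * (1 + |t|) * √d * V) ^ 2 *
        (1 + Real.log (d * Y + 1)) ^ ((k + 1) * (k + 1) + 1)) := by
  set D := dualCoeff (d := d) (twist a t) (Ioc ⌊M⌋₊ ⌊2 * M⌋₊)
  set u := fun χ : DirichletCharacter ℂ d =>
    charSum (cutoff (fun m => D m) 0 (d / 2)) (d / 2) χ * charSum c Y χ
  set v := fun χ : DirichletCharacter ℂ d =>
    charSum (cutoff (fun m => D (-m)) 0 ((d - 1) / 2)) ((d - 1) / 2) χ * charSum c Y χ
  have hpos : ∀ m : ℕ, 2 * m ≤ d →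
      4 * (m : ℝ) / d ≤ ‖(ZMod.stdAddChar (m : ZMod d) : ℂ) - 1‖ :=
    fun m hm => four_mul_div_le_norm_stdAddChar_sub_one hm
  have hneg : ∀ m : ℕ, 2 * m ≤ d →
      4 * (m : ℝ) / d ≤ ‖(ZMod.stdAddChar (-m : ZMod d) : ℂ) - 1‖ := by
    intro m hm
    rw [AddChar.map_neg_eq_conj, ← map_one (starRingEnd ℂ), ← map_sub, RCLike.norm_conj]
    exact hpos m hm
  have hu : ∑ χ, ‖u χ‖ ^ 2 ≤ _ := ha.sum_norm_charSum_dualCoeff_mul_sq_le hM hH hY hc hcV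
    (by omega) fun m hm => hpos m (by have := mem_Ioc.1 hm; omega)
  have hv : ∑ χ, ‖v χ‖ ^ 2 ≤ _ := ha.sum_norm_charSum_dualCoeff_mul_sq_le hM hH hY hc hcV
    (by omega) fun m hm => hneg m (by have := mem_Ioc.1 hm; omega)
  have hpointwise : ∀ χ : DirichletCharacter ℂ d, χ.IsPrimitive →
      ‖blockSum a M t χ * charSum c Y χ‖ ^ 2 ≤ 2 * (‖u χ‖ ^ 2 + ‖v χ‖ ^ 2) := by
    intro χ hχ
    refine (pow_le_pow_left₀ (norm_nonneg _) ?_ 2).trans add_sq_le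
    rw [norm_mul, norm_mul, norm_mul, ← add_mul, blockSum_eq_sum, norm_sum_eq_norm_sum_dualCoeff hχ]
    exact mul_le_mul_of_nonneg_right (norm_sum_mul_apply_le_fold hd χ D) (norm_nonneg _)
  refine (sumPrimitive_le_sum (fun χ => by positivity) hpointwise).trans ?_
  rw [← mul_sum, sum_add_distrib]
  linarith

end DualMoment

section Partition

variable {ι : Type*} [Fintype ι] {P : ι → ℝ} {L : ℝ}

lemma exists_prod_le_and_eq_univ_or_lt_mul_prod (hP : ∀ i, 0 ≤ P i) {S₀ : Finset ι}
    (hL : ∀ i ∉ S₀, P i ≤ L) {Q : ℝ} (hQ : ∏ i ∈ S₀, P i ≤ Q) :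
    ∃ S, ∏ i ∈ S, P i ≤ Q ∧ (S = univ ∨ Q < L * ∏ i ∈ S, P i) := by
  classical
  obtain ⟨S, hS₀, hS⟩ := Finite.exists_le_maximal (p := fun S => ∏ i ∈ S, P i ≤ Q) hQ
  refine ⟨S, hS.prop, or_iff_not_imp_left.2 fun hne => ?_⟩
  obtain ⟨i, hi⟩ : ∃ i, i ∉ S := by simpa [eq_univ_iff_forall] using hne
  have hins : Q < ∏ i ∈ insert i S, P i := by
    by_contra! hle
    exact hi (hS.le_of_ge hle (subset_insert i S) (mem_insert_self i S))
  rw [prod_insert hi] at hins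
  exact hins.trans_le
    (mul_le_mul_of_nonneg_right (hL i fun h => hi (hS₀ h)) (prod_nonneg fun i _ => hP i))

variable [DecidableEq ι]

lemma prod_compl_le_of_le_prod (hP : ∀ i, 0 ≤ P i) {S : Finset ι} {Q R : ℝ} (hQ : 0 < Q)
    (hprod : ∏ i, P i ≤ Q * R) (hS : Q ≤ ∏ i ∈ S, P i) : ∏ i ∈ Sᶜ, P i ≤ R := by
  rw [← prod_mul_prod_compl S] at hprod
  exact le_of_mul_le_mul_left
    ((mul_le_mul_of_nonneg_right hS (prod_nonneg fun i _ => hP i)).trans hprod) hQ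

lemma exists_prod_le_and_prod_compl_le_or (hP : ∀ i, 1 ≤ P i) (hL : 1 ≤ L)
    (hprod : ∏ i, P i ≤ L ^ 5) :
    (∃ S, ∏ i ∈ S, P i ≤ L ^ 3 ∧ ∏ i ∈ Sᶜ, P i ≤ L ^ 3) ∨
      ∃ j, ∃ S, j ∉ S ∧ L < P j ∧ ∏ i ∈ S, P i ≤ P j ∧ ∏ i ∈ (insert j S)ᶜ, P i ≤ L ^ 3 := by
  have hP0 : ∀ i, 0 ≤ P i := fun i => zero_le_one.trans (hP i)
  have hcompl : ∀ S : Finset ι, L ^ 2 ≤ ∏ i ∈ S, P i → ∏ i ∈ Sᶜ, P i ≤ L ^ 3 := fun S =>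
    prod_compl_le_of_le_prod hP0 (by positivity) (by rwa [← pow_add])
  have hL3 : 1 ≤ L ^ 3 := one_le_pow₀ hL
  set S₀ := univ.filter fun i => L < P i with hS₀
  rcases le_or_gt (∏ i ∈ S₀, P i) (L ^ 3) with hsmall | hlarge
  · have hoff : ∀ i ∉ S₀, P i ≤ L := fun i hi => by simpa [hS₀] using hi
    obtain ⟨S, hS, rfl | hmax⟩ := exists_prod_le_and_eq_univ_or_lt_mul_prod hP0 hoff hsmall
    · exact Or.inl ⟨univ, hS, by simpa using hL3⟩
    · refine Or.inl ⟨S, hS, hcompl S (le_of_mul_le_mul_left ?_ (zero_lt_one.trans_le hL))⟩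
      rw [← pow_succ']
      exact hmax.le
  · have hne : S₀.Nonempty := by
      rw [nonempty_iff_ne_empty]
      intro h
      rw [h, prod_empty] at hlarge
      exact hlarge.not_ge hL3
    obtain ⟨j, hj, hmax⟩ := exists_max_image S₀ P hne
    have hLj : L < P j := (mem_filter.1 hj).2
    refine Or.inr ⟨j, ?_⟩
    by_cases hsecond : ∃ i ∈ S₀, i ≠ j
    · obtain ⟨i, hi, hij⟩ := hsecond
      refine ⟨{i}, by simpa using hij.symm, hLj, by simpa using hmax i hi, hcompl _ ?_⟩
      rw [prod_insert (by simpa using hij.symm), prod_singleton, sq]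
      exact mul_le_mul hLj.le (mem_filter.1 hi).2.le (by positivity) (hP0 j)
    · push Not at hsecond
      refine ⟨∅, notMem_empty j, hLj, by simpa using hP j, hcompl _ ?_⟩
      rw [eq_singleton_iff_unique_mem.2 ⟨hj, hsecond⟩, prod_singleton] at hlarge
      rw [insert_empty, prod_singleton]
      exact (pow_le_pow_right₀ hL (by norm_num)).trans hlarge.le

end Partition

lemma sum_norm_prod_charSum_sq_le {ι : Type*} {d : ℕ} [NeZero d] {c : ι → ArithmeticFunction ℂ}
    {X : ι → ℕ} {V : ℝ} (S : Finset ι) (hc : ∀ j ∈ S, ∀ n, X j < n → c j n = 0)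
    (hV : ∀ j ∈ S, ∀ n, ‖c j n‖ ≤ V * invSqrt n) :
    ∑ χ : DirichletCharacter ℂ d, ‖∏ j ∈ S, charSum (c j) (X j) χ‖ ^ 2 ≤
      (d + (∏ j ∈ S, X j : ℕ)) * V ^ (2 * #S) *
        (1 + Real.log ((∏ j ∈ S, X j : ℕ) + 1)) ^ (#S * #S + 1) := by
  simp only [prod_charSum S hc]
  refine (sum_norm_charSum_sq_le (k := #S) (V := √(d + (∏ j ∈ S, X j : ℕ)) * V ^ #S)
    fun n hn => ?_).trans_eq ?_
  · have hnX : (n : ℝ) ≤ (∏ j ∈ S, X j : ℕ) := mod_cast (mem_Ioc.1 hn).2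
    rw [mul_assoc]
    exact mul_le_mul (Real.sqrt_le_sqrt (by linarith)) (norm_prod_apply_le S hV n)
      (norm_nonneg _) (Real.sqrt_nonneg _)
  · rw [mul_pow, Real.sq_sqrt (by positivity), ← pow_mul, mul_comm #S 2]

section BlockMoment

variable {ι : Type*} {d : ℕ} {a : ι → ℕ → ℂ} {M : ι → ℝ} {t H : ℝ}

lemma natCast_prod_floor_le (hM : ∀ j, 0 ≤ M j) (S : Finset ι) :
    ((∏ j ∈ S, ⌊2 * M j⌋₊ : ℕ) : ℝ) ≤ ∏ j ∈ S, 2 * M j := by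
  rw [Nat.cast_prod]
  exact prod_le_prod (fun _ _ => Nat.cast_nonneg _)
    fun j _ => Nat.floor_le (mul_nonneg zero_le_two (hM j))

variable [Fintype ι]

lemma prod_two_mul_le_prod_univ (hM : ∀ j, 1 / 2 ≤ M j) (S : Finset ι) :
    ∏ j ∈ S, 2 * M j ≤ ∏ j, 2 * M j := by
  have hP : ∀ j, 1 ≤ 2 * M j := fun j => by linarith [hM j]
  exact prod_le_prod_of_subset_of_one_le (subset_univ S) (fun j _ => zero_le_one.trans (hP j))
    fun j _ _ => hP j

lemma one_add_log_add_one_le (hH : 1 + Real.log (d * ∏ j, 2 * M j + 1) ≤ H) {x : ℝ} (hx : 0 ≤ x)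
    (hxd : x ≤ d * ∏ j, 2 * M j) : 1 + Real.log (x + 1) ≤ H := by
  linarith [Real.log_le_log (by linarith : 0 < x + 1) (add_le_add_left hxd 1)]

variable [NeZero d]

lemma prod_two_mul_le_mul_prod (hM : ∀ j, 1 / 2 ≤ M j) (S : Finset ι) :
    ∏ j ∈ S, 2 * M j ≤ d * ∏ j, 2 * M j := by
  have hd : (1 : ℝ) ≤ d := mod_cast NeZero.one_le
  exact (prod_two_mul_le_prod_univ hM S).trans
    (le_mul_of_one_le_left (prod_nonneg fun j _ => by linarith [hM j]) hd)

lemma one_le_of_one_add_log_le (hM : ∀ j, 1 / 2 ≤ M j)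
    (hH : 1 + Real.log (d * ∏ j, 2 * M j + 1) ≤ H) : 1 ≤ H := by
  have hprod : 1 ≤ d * ∏ j, 2 * M j := by simpa using prod_two_mul_le_mul_prod (d := d) hM ∅
  linarith [Real.log_nonneg (by linarith : 1 ≤ d * ∏ j, 2 * M j + 1)]

lemma one_add_log_two_mul_add_one_le (hM : ∀ j, 1 / 2 ≤ M j)
    (hH : 1 + Real.log (d * ∏ j, 2 * M j + 1) ≤ H) (j : ι) :
    1 + Real.log (2 * M j + 1) ≤ H :=
  one_add_log_add_one_le hH (by linarith [hM j])
    (by simpa using prod_two_mul_le_mul_prod (d := d) hM {j})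

lemma norm_blockCoeff_le_of_one_add_log_le (hM : ∀ j, 1 / 2 ≤ M j)
    (ha : ∀ j n, 1 ≤ n → ‖a j n‖ ≤ 1 + Real.log n)
    (hH : 1 + Real.log (d * ∏ j, 2 * M j + 1) ≤ H) (j : ι) (n : ℕ) :
    ‖blockCoeff (a j) (M j) t n‖ ≤ H * invSqrt n := by
  have hMj : 0 < M j := by linarith [hM j]
  refine norm_blockCoeff_le (zero_le_one.trans (one_le_of_one_add_log_le hM hH))
    (fun n hn => ?_) n
  obtain ⟨-, hlog⟩ := le_and_log_le_of_mem_Ioc_floor hMj (Ioc_subset_Ioc_right (Nat.le_succ _) hn)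
  have hn := ha j n (Nat.zero_lt_of_lt (mem_Ioc.1 hn).1)
  linarith [one_add_log_two_mul_add_one_le hM hH j]

lemma sumPrimitive_norm_prod_blockSum_sq_le (hM : ∀ j, 1 / 2 ≤ M j)
    (ha : ∀ j n, 1 ≤ n → ‖a j n‖ ≤ 1 + Real.log n)
    (hH : 1 + Real.log (d * ∏ j, 2 * M j + 1) ≤ H) (S : Finset ι) :
    sumPrimitive d (fun χ => ‖∏ j ∈ S, blockSum (a j) (M j) t χ‖ ^ 2) ≤
      (d + ∏ j ∈ S, 2 * M j) * H ^ (Fintype.card ι + 1) ^ 2 := by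
  have hM0 : ∀ j, 0 ≤ M j := fun j => by linarith [hM j]
  have hH1 : 1 ≤ H := one_le_of_one_add_log_le hM hH
  have hcard : 2 * #S + (#S * #S + 1) ≤ (Fintype.card ι + 1) ^ 2 := by
    calc 2 * #S + (#S * #S + 1) = (#S + 1) ^ 2 := by ring
      _ ≤ (Fintype.card ι + 1) ^ 2 := by gcongr; exact card_le_univ S
  set Y := ∏ j ∈ S, ⌊2 * M j⌋₊
  have hY : (Y : ℝ) ≤ ∏ j ∈ S, 2 * M j := natCast_prod_floor_le hM0 S
  have hS0 : 0 ≤ ∏ j ∈ S, 2 * M j := Y.cast_nonneg.trans hY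
  have hlog : 1 + Real.log (Y + 1) ≤ H :=
    one_add_log_add_one_le hH Y.cast_nonneg (hY.trans (prod_two_mul_le_mul_prod hM S))
  have hlog0 : 0 ≤ Real.log (Y + 1) := Real.log_nonneg (le_add_of_nonneg_left Y.cast_nonneg)
  calc sumPrimitive d (fun χ => ‖∏ j ∈ S, blockSum (a j) (M j) t χ‖ ^ 2)
      ≤ ∑ χ : DirichletCharacter ℂ d,
          ‖∏ j ∈ S, charSum (blockCoeff (a j) (M j) t) ⌊2 * M j⌋₊ χ‖ ^ 2 := by
        refine sumPrimitive_le_sum (fun χ => by positivity) fun χ _ => ?_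
        simp only [blockSum_eq_charSum, le_rfl]
    _ ≤ (d + Y) * H ^ (2 * #S) * (1 + Real.log (Y + 1)) ^ (#S * #S + 1) :=
        sum_norm_prod_charSum_sq_le S (fun j _ n hn => cutoff_apply_of_lt hn)
          fun j _ => norm_blockCoeff_le_of_one_add_log_le hM ha hH j
    _ ≤ (d + ∏ j ∈ S, 2 * M j) * H ^ (2 * #S) * H ^ (#S * #S + 1) := by gcongr
    _ ≤ (d + ∏ j ∈ S, 2 * M j) * H ^ (Fintype.card ι + 1) ^ 2 := by
        rw [mul_assoc, ← pow_add]
        gcongr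

lemma sumPrimitive_norm_prod_insert_blockSum_sq_le [DecidableEq ι] (hd : 2 ≤ d)
    (hM : ∀ j, 1 / 2 ≤ M j) (ha : ∀ j n, 1 ≤ n → ‖a j n‖ ≤ 1 + Real.log n)
    (hH : 1 + Real.log (d * ∏ j, 2 * M j + 1) ≤ H) {j : ι} {S : Finset ι} (hj : j ∉ S)
    (hsmooth : IsSmoothCoeff (a j)) (hMj : 1 ≤ M j) (hS : ∏ i ∈ S, 2 * M i ≤ 2 * M j) :
    sumPrimitive d (fun χ => ‖∏ i ∈ insert j S, blockSum (a i) (M i) t χ‖ ^ 2) ≤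
      100 * (1 + |t|) ^ 2 * d * H ^ (Fintype.card ι + 1) ^ 2 := by
  have hM0 : ∀ i, 0 ≤ M i := fun i => by linarith [hM i]
  have hH1 : 1 ≤ H := one_le_of_one_add_log_le hM hH
  have hcard : 2 + 2 * #S + ((#S + 1) * (#S + 1) + 1) ≤ (Fintype.card ι + 1) ^ 2 := by
    have hle := card_le_univ (insert j S)
    rw [card_insert_of_notMem hj] at hle
    calc 2 + 2 * #S + ((#S + 1) * (#S + 1) + 1) = (#S + 1 + 1) ^ 2 := by ring
      _ ≤ (Fintype.card ι + 1) ^ 2 := by gcongr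
  set Y := ∏ i ∈ S, ⌊2 * M i⌋₊
  set c := ∏ i ∈ S, blockCoeff (a i) (M i) t
  have hc : ∀ i ∈ S, ∀ n, ⌊2 * M i⌋₊ < n → blockCoeff (a i) (M i) t n = 0 :=
    fun i _ n hn => cutoff_apply_of_lt hn
  have hY : (Y : ℝ) ≤ ∏ i ∈ S, 2 * M i := natCast_prod_floor_le hM0 S
  have hlog : 1 + Real.log (d * Y + 1) ≤ H := by
    refine one_add_log_add_one_le hH (by positivity) ?_
    gcongr
    exact hY.trans (prod_two_mul_le_prod_univ hM S)
  have hlog0 : 0 ≤ Real.log (d * Y + 1) := Real.log_nonneg (le_add_of_nonneg_left (by positivity))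
  calc sumPrimitive d (fun χ => ‖∏ i ∈ insert j S, blockSum (a i) (M i) t χ‖ ^ 2)
      = sumPrimitive d (fun χ => ‖blockSum (a j) (M j) t χ * charSum c Y χ‖ ^ 2) := by
        simp only [prod_insert hj, c, Y, ← prod_charSum S hc, ← blockSum_eq_charSum]
    _ ≤ 4 * ((5 * H * (1 + |t|) * √d * H ^ #S) ^ 2 *
          (1 + Real.log (d * Y + 1)) ^ ((#S + 1) * (#S + 1) + 1)) :=
        hsmooth.sumPrimitive_norm_blockSum_mul_sq_le hd hMj
          (one_add_log_two_mul_add_one_le hM hH j) (hY.trans hS) (prod_apply_eq_zero_of_lt S hc)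
          (norm_prod_apply_le S fun i _ => norm_blockCoeff_le_of_one_add_log_le hM ha hH i)
    _ ≤ 4 * ((5 * H * (1 + |t|) * √d * H ^ #S) ^ 2 * H ^ ((#S + 1) * (#S + 1) + 1)) := by
        gcongr
    _ = 100 * (1 + |t|) ^ 2 * d * H ^ (2 + 2 * #S + ((#S + 1) * (#S + 1) + 1)) := by
        rw [mul_pow, mul_pow _ (√d), Real.sq_sqrt d.cast_nonneg]
        ring
    _ ≤ 100 * (1 + |t|) ^ 2 * d * H ^ (Fintype.card ι + 1) ^ 2 := by gcongr

end BlockMoment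

section FirstMoment

variable {ι : Type*} [Fintype ι] {d : ℕ} [NeZero d] {a : ι → ℕ → ℂ} {M : ι → ℝ} {t H L : ℝ}

lemma sumPrimitive_norm_prod_blockSum_sq_le_mul [DecidableEq ι] (hM : ∀ j, 1 / 2 ≤ M j)
    (ha : ∀ j n, 1 ≤ n → ‖a j n‖ ≤ 1 + Real.log n)
    (hH : 1 + Real.log (d * ∏ j, 2 * M j + 1) ≤ H) (S : Finset ι) :
    sumPrimitive d (fun χ => ‖∏ j, blockSum (a j) (M j) t χ‖) ^ 2 ≤
      (d + ∏ j ∈ S, 2 * M j) * (d + ∏ j ∈ Sᶜ, 2 * M j) * (H ^ (Fintype.card ι + 1) ^ 2) ^ 2 := by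
  have hcs := sumPrimitive_norm_mul_sq_le
    (sumPrimitive_norm_prod_blockSum_sq_le (t := t) hM ha hH S)
    (sumPrimitive_norm_prod_blockSum_sq_le (t := t) hM ha hH Sᶜ)
  simp only [prod_mul_prod_compl] at hcs
  exact hcs.trans_eq (by ring)

lemma sumPrimitive_norm_prod_blockSum_sq_le_of_smooth [DecidableEq ι] (hd : 2 ≤ d)
    (hM : ∀ j, 1 / 2 ≤ M j) (ha : ∀ j n, 1 ≤ n → ‖a j n‖ ≤ 1 + Real.log n)
    (hH : 1 + Real.log (d * ∏ j, 2 * M j + 1) ≤ H) {j : ι} {S : Finset ι} (hj : j ∉ S)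
    (hsmooth : IsSmoothCoeff (a j)) (hMj : 1 ≤ M j) (hS : ∏ i ∈ S, 2 * M i ≤ 2 * M j) :
    sumPrimitive d (fun χ => ‖∏ j, blockSum (a j) (M j) t χ‖) ^ 2 ≤
      100 * (d * (d + ∏ i ∈ (insert j S)ᶜ, 2 * M i)) *
        ((1 + |t|) * H ^ (Fintype.card ι + 1) ^ 2) ^ 2 := by
  have hcs := sumPrimitive_norm_mul_sq_le
    (sumPrimitive_norm_prod_insert_blockSum_sq_le (t := t) hd hM ha hH hj hsmooth hMj hS)
    (sumPrimitive_norm_prod_blockSum_sq_le (t := t) hM ha hH (insert j S)ᶜ)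
  simp only [prod_mul_prod_compl] at hcs
  exact hcs.trans_eq (by ring)

lemma sumPrimitive_norm_prod_blockSum_sq_le_of_prod_le (hd : 2 ≤ d) (hM : ∀ j, 1 / 2 ≤ M j)
    (ha : ∀ j n, 1 ≤ n → ‖a j n‖ ≤ 1 + Real.log n)
    (hH : 1 + Real.log (d * ∏ j, 2 * M j + 1) ≤ H) (hL : 2 ≤ L) (hprod : ∏ j, 2 * M j ≤ L ^ 5)
    (hsmooth : ∀ j, L < 2 * M j → IsSmoothCoeff (a j)) :
    sumPrimitive d (fun χ => ‖∏ j, blockSum (a j) (M j) t χ‖) ^ 2 ≤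
      100 * (d ^ 2 + 2 * d * L ^ 3 + L ^ 5) *
        ((1 + |t|) * H ^ (Fintype.card ι + 1) ^ 2) ^ 2 := by
  classical
  have hH0 : 0 ≤ H := zero_le_one.trans (one_le_of_one_add_log_le hM hH)
  rcases exists_prod_le_and_prod_compl_le_or (fun j => by linarith [hM j]) (by linarith) hprod with
    ⟨S, hS, hSc⟩ | ⟨j, S, hj, hLj, hS, hSc⟩
  · have hlen : (d + ∏ j ∈ S, 2 * M j) * (d + ∏ j ∈ Sᶜ, 2 * M j) ≤
        d ^ 2 + 2 * d * L ^ 3 + L ^ 5 := by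
      calc (d + ∏ j ∈ S, 2 * M j) * (d + ∏ j ∈ Sᶜ, 2 * M j)
          = d ^ 2 + d * (∏ j ∈ S, 2 * M j + ∏ j ∈ Sᶜ, 2 * M j) + ∏ j, 2 * M j := by
            rw [← prod_mul_prod_compl S]; ring
        _ ≤ d ^ 2 + d * (L ^ 3 + L ^ 3) + L ^ 5 := by gcongr
        _ = d ^ 2 + 2 * d * L ^ 3 + L ^ 5 := by ring
    have hlen0 : (0 : ℝ) ≤ d ^ 2 + 2 * d * L ^ 3 + L ^ 5 := by positivity
    refine (sumPrimitive_norm_prod_blockSum_sq_le_mul hM ha hH S).trans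
      (mul_le_mul (by linarith) ?_ (by positivity) (by positivity))
    gcongr
    exact le_mul_of_one_le_left (by positivity) (by linarith [abs_nonneg t])
  · refine (sumPrimitive_norm_prod_blockSum_sq_le_of_smooth hd hM ha hH hj (hsmooth j hLj)
      (by linarith) hS).trans ?_
    gcongr
    calc d * (d + ∏ i ∈ (insert j S)ᶜ, 2 * M i) ≤ d * (d + L ^ 3) := by gcongr
      _ ≤ d ^ 2 + 2 * d * L ^ 3 + L ^ 5 := by
        linarith [show (0 : ℝ) ≤ d * L ^ 3 + L ^ 5 by positivity]

end FirstMoment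

section Exponents

variable {d N : ℝ}

lemma sq_add_two_mul_mul_rpow_add_rpow_le (hd : 0 < d) (hN : 1 ≤ N) :
    d ^ 2 + 2 * d * N ^ (9 / 8 : ℝ) + N ^ (15 / 8 : ℝ) ≤
      ((N + d) ^ 2 * N ^ (1 / 16 : ℝ) / d) ^ 2 := by
  have hN0 : 0 < N := by linarith
  have hsplit : N ^ (9 / 8 : ℝ) = N * N ^ (1 / 8 : ℝ) := by
    rw [← Real.rpow_one_add' hN0.le (by norm_num)]; norm_num
  have hsq : (N ^ (1 / 16 : ℝ)) ^ 2 = N ^ (1 / 8 : ℝ) := by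
    rw [← Real.rpow_mul_natCast hN0.le]; norm_num
  have hlen : N ^ (15 / 8 : ℝ) ≤ N ^ 2 := by
    rw [← Real.rpow_natCast N 2]
    exact Real.rpow_le_rpow_of_exponent_le hN (by norm_num)
  have hone : 1 ≤ N ^ (1 / 8 : ℝ) := Real.one_le_rpow hN (by norm_num)
  rw [div_pow, le_div_iff₀ (by positivity), mul_pow, hsq, hsplit]
  set u := N ^ (1 / 8 : ℝ)
  calc (d ^ 2 + 2 * d * (N * u) + N ^ (15 / 8 : ℝ)) * d ^ 2
      ≤ (d ^ 2 * u + 2 * d * (N * u) + N ^ 2 * u) * d ^ 2 := by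
        gcongr
        · exact le_mul_of_one_le_right (by positivity) hone
        · exact hlen.trans (le_mul_of_one_le_right (by positivity) hone)
    _ = (d * (N + d)) ^ 2 * u := by ring
    _ ≤ ((N + d) ^ 2) ^ 2 * u := by
        rw [sq (N + d)]
        gcongr
        linarith

lemma two_pow_mul_rpow_pow_five (hN : 0 ≤ N) (k : ℕ) :
    (2 ^ (k + 1) * N ^ (3 / 8 : ℝ)) ^ 5 = 2 ^ (5 * k + 5) * N ^ (15 / 8 : ℝ) := by
  rw [mul_pow, ← pow_mul, ← Real.rpow_mul_natCast hN]
  norm_num [add_mul, mul_comm k]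

lemma hundred_mul_length_le_sq (hd : 0 < d) (hN : 1 ≤ N) (k : ℕ) {L : ℝ}
    (hL : L = 2 ^ (k + 1) * N ^ (3 / 8 : ℝ)) :
    100 * (d ^ 2 + 2 * d * L ^ 3 + L ^ 5) ≤
      (2 ^ (3 * k + 7) * ((N + d) ^ 2 * N ^ (1 / 16 : ℝ) / d)) ^ 2 := by
  have hN0 : 0 ≤ N := by linarith
  have hL3 : L ^ 3 = 2 ^ (3 * k + 3) * N ^ (9 / 8 : ℝ) := by
    rw [hL, mul_pow, ← pow_mul, ← Real.rpow_mul_natCast hN0]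
    norm_num [add_mul, mul_comm k]
  have hL5 : L ^ 5 = 2 ^ (5 * k + 5) * N ^ (15 / 8 : ℝ) := by
    rw [hL, two_pow_mul_rpow_pow_five hN0]
  have hone : (1 : ℝ) ≤ 2 ^ (5 * k + 5) := one_le_pow₀ one_le_two
  calc 100 * (d ^ 2 + 2 * d * L ^ 3 + L ^ 5)
      ≤ 2 ^ 9 * (2 ^ (5 * k + 5) * d ^ 2 + 2 * d * (2 ^ (5 * k + 5) * N ^ (9 / 8 : ℝ)) +
          2 ^ (5 * k + 5) * N ^ (15 / 8 : ℝ)) := by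
        rw [hL3, hL5]
        gcongr
        · norm_num
        · exact le_mul_of_one_le_left (by positivity) hone
        · exact one_le_two
        all_goals norm_num
    _ = 2 ^ (5 * k + 14) * (d ^ 2 + 2 * d * N ^ (9 / 8 : ℝ) + N ^ (15 / 8 : ℝ)) := by ring
    _ ≤ 2 ^ (6 * k + 14) * ((N + d) ^ 2 * N ^ (1 / 16 : ℝ) / d) ^ 2 := by
        gcongr
        · exact one_le_two
        · norm_num
        · exact sq_add_two_mul_mul_rpow_add_rpow_le hd hN
    _ = (2 ^ (3 * k + 7) * ((N + d) ^ 2 * N ^ (1 / 16 : ℝ) / d)) ^ 2 := by ring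

lemma add_one_mul_add_two_pow_mul_sq_le_sq (hd : 1 ≤ d) (hN : 1 ≤ N) (k : ℕ) :
    (d + 1) * (d + 2 ^ k * N ^ 2) ≤ (2 ^ (k + 1) * (d * N)) ^ 2 := by
  have hone : (1 : ℝ) ≤ 2 ^ k := one_le_pow₀ one_le_two
  have hdN : d ≤ 2 ^ k * (d * N ^ 2) :=
    (le_mul_of_one_le_right (by linarith) (one_le_pow₀ hN)).trans
      (le_mul_of_one_le_left (by positivity) hone)
  calc (d + 1) * (d + 2 ^ k * N ^ 2) ≤ 2 * d * (2 ^ k * (d * N ^ 2) + 2 ^ k * (d * N ^ 2)) := by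
        gcongr
        · linarith
        · exact le_mul_of_one_le_left (by positivity) hd
    _ = 2 ^ k * (4 * (d * N) ^ 2) := by ring
    _ ≤ (2 ^ k) ^ 2 * (4 * (d * N) ^ 2) := by
        gcongr
        exact le_self_pow₀ hone two_ne_zero
    _ = (2 ^ (k + 1) * (d * N)) ^ 2 := by ring

lemma one_le_sq_mul_rpow_div (hd : 1 ≤ d) (hN : 1 ≤ N) :
    1 ≤ (N + d) ^ 2 * N ^ (1 / 16 : ℝ) / d := by
  rw [one_le_div (by linarith)]
  calc d ≤ N + d := by linarith
    _ ≤ (N + d) ^ 2 := le_self_pow₀ (by linarith) two_ne_zero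
    _ ≤ (N + d) ^ 2 * N ^ (1 / 16 : ℝ) :=
        le_mul_of_one_le_right (by positivity) (Real.one_le_rpow hN (by norm_num))

lemma one_le_log_of_four_le {x : ℝ} (hx : 4 ≤ x) : 1 ≤ Real.log x := by
  rw [Real.le_log_iff_exp_le (by linarith)]
  linarith [Real.exp_one_lt_three]

lemma one_add_log_two_pow_mul_sq_add_one_le {x : ℝ} (hx : 4 ≤ x) (k : ℕ) :
    1 + Real.log (2 ^ k * x ^ 2 + 1) ≤ (k + 4) * Real.log x := by
  have hpow : 2 ^ k * x ^ 2 + 1 ≤ x ^ (k + 3) := by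
    calc 2 ^ k * x ^ 2 + 1 ≤ 2 ^ k * x ^ 2 + 2 ^ k * x ^ 2 := by
          gcongr
          exact one_le_mul_of_one_le_of_one_le (one_le_pow₀ one_le_two)
            (one_le_pow₀ (by linarith))
      _ = 2 ^ (k + 1) * x ^ 2 := by ring
      _ ≤ x ^ (k + 1) * x ^ 2 := by gcongr; linarith
      _ = x ^ (k + 3) := by ring
  have hlog := Real.log_le_log (by positivity) hpow
  rw [Real.log_pow] at hlog
  push_cast at hlog
  linarith [one_le_log_of_four_le hx]

end Exponents

section Integral

lemma integrable_one_add_abs_rpow {η : ℝ} (hη : 0 < η) :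
    Integrable fun t : ℝ => (1 + |t|) ^ (-(1 + η)) := by
  simpa [Real.norm_eq_abs] using
    integrable_one_add_norm (E := ℝ) (μ := volume) (r := 1 + η) (by simp [hη])

lemma integral_one_add_abs_rpow {η : ℝ} (hη : 0 < η) :
    ∫ t : ℝ, (1 + |t|) ^ (-(1 + η)) = 2 / η := by
  have hshift : ∫ t in Set.Ioi (0 : ℝ), (1 + t) ^ (-(1 + η)) =
      ∫ t in Set.Ioi (1 : ℝ), t ^ (-(1 + η)) := by
    simpa using (measurePreserving_add_left volume (1 : ℝ)).setIntegral_preimage_emb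
      (measurableEmbedding_addLeft 1) (fun t => t ^ (-(1 + η))) (Set.Ioi 1)
  rw [integral_comp_abs (f := fun t : ℝ => (1 + t) ^ (-(1 + η))), hshift,
    integral_Ioi_rpow_of_lt (by linarith) one_pos, Real.one_rpow,
    show -(1 + η) + 1 = -η by ring]
  field_simp

lemma min_le_rpow_mul_rpow {x y η : ℝ} (hx : 0 < x) (hy : 0 < y) (h0 : 0 ≤ η) (h1 : η ≤ 1) :
    min x y ≤ x ^ (1 - η) * y ^ η := by
  have hmin : 0 < min x y := lt_min hx hy
  calc min x y = min x y ^ (1 - η) * min x y ^ η := by rw [← Real.rpow_add hmin]; simp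
    _ ≤ x ^ (1 - η) * y ^ η := by
        gcongr
        exacts [min_le_left x y, min_le_right x y]

-- With `η = 1 / log D` the bounds interpolate to `F t ≤ e * W * (1 + |t|) ^ (1 - η)`.
lemma integral_div_sq_add_one_le {F : ℝ → ℝ} {W D : ℝ} (hF : ∀ t, 0 ≤ F t) (hD : 0 < D)
    (hlog : 1 ≤ Real.log D) (hlin : ∀ t, F t ≤ W * (1 + |t|)) (hconst : ∀ t, F t ≤ W * D) :
    ∫ t : ℝ, F t / (t ^ 2 + 1) ≤ W * (4 * Real.exp 1) * Real.log D := by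
  have hW : 0 ≤ W := by simpa using (hF 0).trans (hlin 0)
  set η := 1 / Real.log D with hη
  have hη0 : 0 < η := by positivity
  have hDη : D ^ η = Real.exp 1 := by
    rw [Real.rpow_def_of_pos hD, hη, mul_one_div_cancel (by linarith)]
  have hbound : ∀ t : ℝ, F t / (t ^ 2 + 1) ≤ W * (2 * Real.exp 1) * (1 + |t|) ^ (-(1 + η)) := by
    intro t
    have ht : 0 < 1 + |t| := by positivity
    have hmin : F t ≤ W * min (1 + |t|) D := by
      rw [mul_min_of_nonneg _ _ hW]; exact le_min (hlin t) (hconst t)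
    have hsplit : (1 + |t|) ^ (1 - η) = (1 + |t|) ^ (-(1 + η)) * (1 + |t|) ^ 2 := by
      rw [← Real.rpow_natCast, ← Real.rpow_add ht]; congr 1; push_cast; ring
    have hsq : (1 + |t|) ^ 2 ≤ 2 * (t ^ 2 + 1) := by
      rw [← sq_abs t]; linarith [sq_nonneg (1 - |t|)]
    rw [div_le_iff₀ (by positivity)]
    calc F t ≤ W * ((1 + |t|) ^ (1 - η) * D ^ η) := hmin.trans (mul_le_mul_of_nonneg_left
          (min_le_rpow_mul_rpow ht hD hη0.le ((div_le_one (by linarith)).2 hlog)) hW)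
      _ = W * Real.exp 1 * (1 + |t|) ^ (-(1 + η)) * (1 + |t|) ^ 2 := by rw [hDη, hsplit]; ring
      _ ≤ W * Real.exp 1 * (1 + |t|) ^ (-(1 + η)) * (2 * (t ^ 2 + 1)) := by gcongr
      _ = W * (2 * Real.exp 1) * (1 + |t|) ^ (-(1 + η)) * (t ^ 2 + 1) := by ring
  calc ∫ t : ℝ, F t / (t ^ 2 + 1)
      ≤ ∫ t : ℝ, W * (2 * Real.exp 1) * (1 + |t|) ^ (-(1 + η)) :=
        integral_mono_of_nonneg (Filter.Eventually.of_forall fun t => div_nonneg (hF t)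
          (by positivity)) ((integrable_one_add_abs_rpow hη0).const_mul _)
          (Filter.Eventually.of_forall hbound)
    _ = W * (4 * Real.exp 1) * Real.log D := by
        rw [integral_const_mul, integral_one_add_abs_rpow hη0, hη]; field_simp; ring

end Integral

lemma norm_moebius_le {n : ℕ} (hn : 1 ≤ n) :
    ‖((ArithmeticFunction.moebius n : ℤ) : ℂ)‖ ≤ 1 + Real.log n := by
  have hone : ‖((ArithmeticFunction.moebius n : ℤ) : ℂ)‖ ≤ 1 := by
    rw [Complex.norm_intCast]
    exact mod_cast ArithmeticFunction.abs_moebius_le_one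
  linarith [Real.log_nonneg (mod_cast hn : (1 : ℝ) ≤ n)]

lemma norm_le_of_eq_one_or_moebius_or_log {a : ℕ → ℂ}
    (ha : (a = fun _ => (1 : ℂ)) ∨ (a = fun n => ((ArithmeticFunction.moebius n : ℤ) : ℂ)) ∨
      a = fun n : ℕ => (Real.log n : ℂ)) {n : ℕ} (hn : 1 ≤ n) : ‖a n‖ ≤ 1 + Real.log n := by
  rcases ha with rfl | rfl | rfl
  exacts [isSmoothCoeff_one.norm_le hn, norm_moebius_le hn, isSmoothCoeff_log.norm_le hn]

section PointwiseBounds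

variable {ι : Type*} [Fintype ι] {d : ℕ} {a : ι → ℕ → ℂ} {M : ι → ℝ} {N H : ℝ}

lemma prod_two_mul_le (hprod : ∏ j, M j ≤ N ^ (15 / 8 : ℝ)) :
    ∏ j, 2 * M j ≤ 2 ^ Fintype.card ι * N ^ (15 / 8 : ℝ) := by
  rw [prod_mul_distrib, prod_const, card_univ]
  gcongr

lemma prod_two_mul_le_sq (hN : 1 ≤ N) (hprod : ∏ j, M j ≤ N ^ (15 / 8 : ℝ)) :
    ∏ j, 2 * M j ≤ 2 ^ Fintype.card ι * N ^ 2 := by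
  refine (prod_two_mul_le hprod).trans ?_
  rw [← Real.rpow_natCast N 2]
  exact mul_le_mul_of_nonneg_left (Real.rpow_le_rpow_of_exponent_le hN (by norm_num))
    (by positivity)

lemma one_add_log_mul_prod_two_mul_le (hd : 2 ≤ d) (hN : 2 ≤ N) (hM : ∀ j, 1 / 2 ≤ M j)
    (hprod : ∏ j, M j ≤ N ^ (15 / 8 : ℝ)) :
    1 + Real.log (d * ∏ j, 2 * M j + 1) ≤ (Fintype.card ι + 4) * Real.log (d * N) := by
  have hd' : (2 : ℝ) ≤ d := mod_cast hd
  have hlen : d * ∏ j, 2 * M j ≤ 2 ^ Fintype.card ι * (d * N) ^ 2 := by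
    calc d * ∏ j, 2 * M j ≤ d ^ 2 * (2 ^ Fintype.card ι * N ^ 2) :=
          mul_le_mul (le_self_pow₀ (by linarith) two_ne_zero)
            (prod_two_mul_le_sq (by linarith) hprod)
            (prod_nonneg fun j _ => by linarith [hM j]) (by positivity)
      _ = 2 ^ Fintype.card ι * (d * N) ^ 2 := by ring
  have hpos : 0 ≤ d * ∏ j, 2 * M j :=
    mul_nonneg d.cast_nonneg (prod_nonneg fun j _ => by linarith [hM j])
  refine le_trans ?_ (one_add_log_two_pow_mul_sq_add_one_le (by nlinarith) _)
  gcongr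

variable [NeZero d]

lemma sumPrimitive_norm_prod_blockSum_le_mul_one_add_abs (hd : 2 ≤ d) (hN : 1 ≤ N)
    (hM : ∀ j, 1 / 2 ≤ M j) (hprod : ∏ j, M j ≤ N ^ (15 / 8 : ℝ))
    (ha : ∀ j n, 1 ≤ n → ‖a j n‖ ≤ 1 + Real.log n)
    (hsmooth : ∀ j, N ^ (3 / 8 : ℝ) < M j → IsSmoothCoeff (a j))
    (hH : 1 + Real.log (d * ∏ j, 2 * M j + 1) ≤ H) (t : ℝ) :
    sumPrimitive d (fun χ => ‖∏ j, blockSum (a j) (M j) t χ‖) ≤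
      2 ^ (3 * Fintype.card ι + 7) * ((N + d) ^ 2 * N ^ (1 / 16 : ℝ) / d) *
        H ^ (Fintype.card ι + 1) ^ 2 * (1 + |t|) := by
  have hN0 : 0 < N := by linarith
  have hH0 : 0 ≤ H := zero_le_one.trans (one_le_of_one_add_log_le hM hH)
  set k := Fintype.card ι
  have hk : (2 : ℝ) ≤ 2 ^ (k + 1) := le_self_pow₀ one_le_two k.succ_ne_zero
  set L := 2 ^ (k + 1) * N ^ (3 / 8 : ℝ) with hLdef
  have hL : 2 ≤ L :=
    hk.trans (le_mul_of_one_le_right (by positivity) (Real.one_le_rpow hN (by norm_num)))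
  have hprodL : ∏ j, 2 * M j ≤ L ^ 5 := by
    rw [hLdef, two_pow_mul_rpow_pow_five hN0.le]
    refine (prod_two_mul_le hprod).trans ?_
    gcongr
    · exact one_le_two
    · omega
  have hsmoothL : ∀ j, L < 2 * M j → IsSmoothCoeff (a j) := fun j hj => hsmooth j <|
    lt_of_mul_lt_mul_left
      ((mul_le_mul_of_nonneg_right hk (by positivity)).trans_lt hj) zero_le_two
  refine le_of_sq_le_sq ?_ (by positivity)
  calc sumPrimitive d (fun χ => ‖∏ j, blockSum (a j) (M j) t χ‖) ^ 2
      ≤ 100 * (d ^ 2 + 2 * d * L ^ 3 + L ^ 5) * ((1 + |t|) * H ^ (k + 1) ^ 2) ^ 2 :=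
        sumPrimitive_norm_prod_blockSum_sq_le_of_prod_le hd hM ha hH hL hprodL hsmoothL
    _ ≤ (2 ^ (3 * k + 7) * ((N + d) ^ 2 * N ^ (1 / 16 : ℝ) / d)) ^ 2 *
          ((1 + |t|) * H ^ (k + 1) ^ 2) ^ 2 := by
        gcongr
        exact hundred_mul_length_le_sq (by positivity) hN k hLdef
    _ = (2 ^ (3 * k + 7) * ((N + d) ^ 2 * N ^ (1 / 16 : ℝ) / d) * H ^ (k + 1) ^ 2 *
          (1 + |t|)) ^ 2 := by ring

lemma sumPrimitive_norm_prod_blockSum_le_mul (hN : 1 ≤ N)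
    (hM : ∀ j, 1 / 2 ≤ M j) (hprod : ∏ j, M j ≤ N ^ (15 / 8 : ℝ))
    (ha : ∀ j n, 1 ≤ n → ‖a j n‖ ≤ 1 + Real.log n)
    (hH : 1 + Real.log (d * ∏ j, 2 * M j + 1) ≤ H) (t : ℝ) :
    sumPrimitive d (fun χ => ‖∏ j, blockSum (a j) (M j) t χ‖) ≤
      2 ^ (Fintype.card ι + 1) * H ^ (Fintype.card ι + 1) ^ 2 * (d * N) := by
  classical
  have hH0 : 0 ≤ H := zero_le_one.trans (one_le_of_one_add_log_le hM hH)
  have hd : (1 : ℝ) ≤ d := mod_cast NeZero.one_le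
  refine le_of_sq_le_sq ?_ (by positivity)
  calc sumPrimitive d (fun χ => ‖∏ j, blockSum (a j) (M j) t χ‖) ^ 2
      ≤ (d + 1) * (d + ∏ j, 2 * M j) * (H ^ (Fintype.card ι + 1) ^ 2) ^ 2 := by
        simpa using sumPrimitive_norm_prod_blockSum_sq_le_mul (t := t) hM ha hH ∅
    _ ≤ (2 ^ (Fintype.card ι + 1) * (d * N)) ^ 2 * (H ^ (Fintype.card ι + 1) ^ 2) ^ 2 := by
        gcongr
        refine le_trans ?_ (add_one_mul_add_two_pow_mul_sq_le_sq hd hN _)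
        gcongr
        exact prod_two_mul_le_sq hN hprod
    _ = (2 ^ (Fintype.card ι + 1) * H ^ (Fintype.card ι + 1) ^ 2 * (d * N)) ^ 2 := by ring

end PointwiseBounds

end DirichletPolynomial

open DirichletPolynomial in
theorem dirichlet_polynomial_decomposition_bound_general {ι : Type*} [Fintype ι] :
    ∃ C > (0 : ℝ), ∃ B > (0 : ℝ), ∀ d : ℕ, 2 ≤ d → ∀ N : ℝ, 2 ≤ N →
      ∀ M : ι → ℝ, (∀ j, 1 / 2 ≤ M j) → (∏ j, M j) ≤ N ^ (15 / 8 : ℝ) →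
      ∀ a : ι → ℕ → ℂ, (∀ j n, 1 ≤ n → ‖a j n‖ ≤ 1 + Real.log n) →
      (∀ j, N ^ (3 / 8 : ℝ) < M j → IsSmoothCoeff (a j)) →
      (∫ t : ℝ, sumPrimitive d (fun χ => ‖∏ j, blockSum (a j) (M j) t χ‖) / (t ^ 2 + 1))
        ≤ C * ((N + d) ^ 2 * N ^ (1 / 16 : ℝ) / d) * Real.log (d * N) ^ B := by
  set k := Fintype.card ι
  refine ⟨2 ^ (3 * k + 7) * (k + 4) ^ (k + 1) ^ 2 * (4 * Real.exp 1), by positivity,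
    (((k + 1) ^ 2 + 1 : ℕ) : ℝ), by positivity, fun d hd N hN M hM hprod a ha hsmooth => ?_⟩
  have : NeZero d := ⟨by omega⟩
  have hd' : (2 : ℝ) ≤ d := mod_cast hd
  have hlog : 1 ≤ Real.log (d * N) := one_le_log_of_four_le (by nlinarith)
  set V := (N + d) ^ 2 * N ^ (1 / 16 : ℝ) / d
  set H := (k + 4) * Real.log (d * N) with hHdef
  have hH : 1 + Real.log (d * ∏ j, 2 * M j + 1) ≤ H :=
    one_add_log_mul_prod_two_mul_le hd hN hM hprod
  have hV : 1 ≤ V := one_le_sq_mul_rpow_div (by linarith) (by linarith)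
  have hconst : ∀ t : ℝ, sumPrimitive d (fun χ => ‖∏ j, blockSum (a j) (M j) t χ‖) ≤
      2 ^ (3 * k + 7) * V * H ^ (k + 1) ^ 2 * (d * N) := fun t => by
    refine (sumPrimitive_norm_prod_blockSum_le_mul (by linarith) hM hprod ha hH t).trans ?_
    gcongr
    refine le_trans ?_ (le_mul_of_one_le_right (by positivity) hV)
    gcongr
    · exact one_le_two
    all_goals omega
  refine (integral_div_sq_add_one_le
    (fun t => sumPrimitive_nonneg fun χ => norm_nonneg _) (by positivity) hlog
    (sumPrimitive_norm_prod_blockSum_le_mul_one_add_abs hd (by linarith) hM hprod ha hsmooth hH)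
    hconst).trans_eq ?_
  rw [Real.rpow_natCast, pow_succ (Real.log (d * N)), hHdef, mul_pow]
  ring

/-- Mean value bound for products of 40 Dirichlet polynomials with total length at most
`N^{15/8-ε}`, with coefficients `1`, `μ(n)` or `log n` (Möbius coefficients only allowed for
short polynomials): the first moment over primitive characters mod `d` and `t`-average is
`≪ ((N+d)² N^{1/16} / d) (log dN)^{O(1)}`. -/
theorem dirichlet_polynomial_decomposition_bound (ε : ℝ) (hε : 0 < ε) :
    ∃ C > (0 : ℝ), ∃ B > (0 : ℝ), ∀ d : ℕ, 2 ≤ d → ∀ N : ℝ, 2 ≤ N →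
      ∀ Nf : Fin 40 → ℝ, (∀ j, 1 / 2 ≤ Nf j) →
      (∏ j, Nf j) ≤ N ^ (15 / 8 - ε : ℝ) →
      ∀ a : Fin 40 → ℕ → ℂ,
      (∀ j, a j = (fun _ => (1 : ℂ)) ∨
            a j = (fun n => ((ArithmeticFunction.moebius n : ℤ) : ℂ)) ∨
            a j = (fun n : ℕ => (Real.log n : ℂ))) →
      (∀ j, N ^ (1 / 10 : ℝ) < Nf j →
            a j = (fun _ => (1 : ℂ)) ∨ a j = (fun n : ℕ => (Real.log n : ℂ))) →
      (∫ t : ℝ, sumPrimitive d (fun χ =>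
          ‖∏ j : Fin 40, ∑ n ∈ Finset.Ioc ⌊Nf j⌋₊ ⌊2 * Nf j⌋₊,
              a j n * χ (n : ZMod d) * (n : ℂ) ^ (-(1 / 2 : ℂ) - Complex.I * t)‖) / (t ^ 2 + 1))
        ≤ C * ((N + d) ^ 2 * N ^ (1 / 16 : ℝ) / d) * Real.log (d * N) ^ (B : ℝ) := by
  obtain ⟨C, hC, B, hB, hbound⟩ := dirichlet_polynomial_decomposition_bound_general (ι := Fin 40)
  refine ⟨C, hC, B, hB, fun d hd N hN Nf hNf hprod a ha hsmooth => ?_⟩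
  have hN1 : 1 ≤ N := by linarith
  exact hbound d hd N hN Nf hNf
    (hprod.trans (Real.rpow_le_rpow_of_exponent_le hN1 (by linarith))) a
    (fun j _ hn => DirichletPolynomial.norm_le_of_eq_one_or_moebius_or_log (ha j) hn)
    fun j hj => DirichletPolynomial.isSmoothCoeff_of_eq_one_or_log <| hsmooth j <|
      (Real.rpow_le_rpow_of_exponent_le hN1 (by norm_num)).trans_lt hj
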